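/- Let (R,m) be a commutative Noetherian local ring and let C be a semidualizing R-module. The following are equivalent: (i) C is dualizing; (ii) there exists an ideal a of R with G_C-dim_R(aC) < ∞ such that C/aC is a dualizing module for the local ring R/a; (iii) there exists a nonzero Cohen-Macaulay R-module M with r_R(M) = 1 and G_C-dim_R(M) < ∞; (iv) r_R(C) = 1 and there exists a nonzero Cohen-Macaulay R-module M with G_C-dim_R(M) < ∞. -/

import Mathlib

/-!
Throughout, `k` is the residue field. `G_C`-dimension is handled through finite resolutions `FR`
whose terms are free except for a totally `C`-reflexive last syzygy, and `Ext` through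
`Abelian.Ext`, which agrees with the derived functor of the statement (`extM_equiv`).

The main implication is that a nonzero Cohen-Macaulay module `M` of finite `G_C`-dimension makes
`C` dualizing as soon as `M` or `C` has type one. Dividing `M` by a maximal `M`-regular sequence
keeps the `G_C`-dimension finite and the type unchanged, so `M` may be taken of finite length
(`cohenMacaulay_key`). Induct on the depth of `C`. If it is positive, some `C`-regular `x`
annihilates `M`, and one passes to `R/x` and `C/xC`: by Rees's isomorphism
`Ext^i_{R/x}(L, C/xC) ≅ Ext^{i+1}_R(L, C)` (`ModReg.ev_iff`), the pair stays semidualizing and `M`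
keeps finite `G_C`-dimension (`ModReg.fr_descend`). If it is zero, `M` is totally reflexive
(`FR.tr_of_socle`). As `Hom(M, C)` maps onto `k`, dualizing embeds `Hom(k, C)` into the socle of `M`;
hence `C` has type one if `M` does. When `C` has type one, `Hom(-, C)` does not increase length,
and `M = Hom(Hom(M, C), C)` forces `Hom(-, C)` to preserve the length of `M`. Then every map
`ker (M → k) → C` extends to `M`, so `Ext^1(k, C) = 0`, and all `Ext^i(k, C)` with `i > 0` vanish
(`TR.ev_residue_of_type_one`). Undoing the reductions, `Ext^i_R(k, C) = 0` for large `i`, which gives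
finite injective dimension by Noetherian induction and Baer's criterion
(`injDim_lt_top_of_residue`).

Conversely a dualizing `C` is itself a Cohen-Macaulay module of type one and `G_C`-dimension zero
(`dualizing_bass`). Dividing by a `C`-regular sequence one may assume depth zero. Then `k` embeds
into `R = Hom(C, C)`, which makes `C` injective on finitely generated modules; so `Hom(R/p, C) = 0`
for `p ≠ m`, and `C = Hom(R, C)` has finite length. Moreover `R = Hom(C, C) → Hom(k, C)` is onto, so
`Hom(k, C)` is cyclic, of length one.

For the condition on ideals take `a = 0` in one direction. In the other, `C/aC` has finite
`G_C`-dimension by `0 → aC → C → C/aC → 0`, and it is a Cohen-Macaulay `R`-module of type one because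
depth, type and dimension may be computed over `R/a`.
-/

open CategoryTheory

universe u

noncomputable section

variable (R : Type u) [CommRing R]

/-- The Ext module `Ext^i_R(M, N)`, via the derived functor definition. -/
noncomputable def extM (M N : Type u) [AddCommGroup M] [Module R M]
    [AddCommGroup N] [Module R N] (i : ℕ) : ModuleCat R :=
  ((Ext R (ModuleCat.{u} R) i).obj (Opposite.op (ModuleCat.of R M))).obj (ModuleCat.of R N)

/-- The Tor module `Tor_i^R(M, N)`, via the derived functor definition. -/
noncomputable def torM (M N : Type u) [AddCommGroup M] [Module R M]
    [AddCommGroup N] [Module R N] (i : ℕ) : ModuleCat R :=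
  ((Tor (ModuleCat.{u} R) i).obj (ModuleCat.of R M)).obj (ModuleCat.of R N)

/-- `C` is a semidualizing `R`-module: it is finitely generated, the homothety map
`R → Hom_R(C,C)` is bijective, and `Ext^i_R(C,C) = 0` for all `i > 0`. -/
def IsSemidualizing (C : Type u) [AddCommGroup C] [Module R C] : Prop :=
  Module.Finite R C ∧
  Function.Bijective (fun r : R => r • (LinearMap.id : C →ₗ[R] C)) ∧
  ∀ i : ℕ, 0 < i → Subsingleton (extM R C C i)

/-- Injective dimension of a module, characterized via vanishing of Ext. -/
noncomputable def injDim (M : Type u) [AddCommGroup M] [Module R M] : ℕ∞ :=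
  sInf {n : ℕ∞ | ∀ (N : Type u) (_ : AddCommGroup N) (_ : Module R N) (i : ℕ),
    n < i → Subsingleton (extM R N M i)}

/-- Flat dimension of a module, characterized via vanishing of Tor. -/
noncomputable def flatDim (M : Type u) [AddCommGroup M] [Module R M] : ℕ∞ :=
  sInf {n : ℕ∞ | ∀ (N : Type u) (_ : AddCommGroup N) (_ : Module R N) (i : ℕ),
    n < i → Subsingleton (torM R N M i)}

/-- The length of a module, as the height of `⊤` in its submodule lattice. -/
noncomputable def mLength (M : Type u) [AddCommGroup M] [Module R M] : ℕ∞ :=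
  Order.height (⊤ : Submodule R M)

/-- Depth of a module over a local ring: the least `i` with `Ext^i(k, M) ≠ 0`. -/
noncomputable def depth [IsLocalRing R] (M : Type u) [AddCommGroup M] [Module R M] : ℕ∞ :=
  sInf {n : ℕ∞ | ∃ i : ℕ, n = i ∧ Nontrivial (extM R (IsLocalRing.ResidueField R) M i)}

/-- Depth, as a natural number. -/
noncomputable def depthNat [IsLocalRing R] (M : Type u) [AddCommGroup M] [Module R M] : ℕ :=
  sInf {i : ℕ | Nontrivial (extM R (IsLocalRing.ResidueField R) M i)}

/-- The type of a module: `r_R(M) = dim_k Ext^t_R(k, M)` where `t = depth_R(M)`. -/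
noncomputable def rtype [IsLocalRing R] (M : Type u) [AddCommGroup M] [Module R M] : ℕ∞ :=
  mLength R (extM R (IsLocalRing.ResidueField R) M (depthNat R M))

/-- A dualizing module: a semidualizing module of finite injective dimension. -/
def IsDualizing (C : Type u) [AddCommGroup C] [Module R C] : Prop :=
  IsSemidualizing R C ∧ injDim R C < ⊤

/-- A pointwise dualizing module: the localization at every maximal ideal is dualizing. -/
def IsPointwiseDualizing (C : Type u) [AddCommGroup C] [Module R C] : Prop :=
  IsSemidualizing R C ∧ ∀ (p : Ideal R) [p.IsPrime], p.IsMaximal →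
    IsDualizing (Localization.AtPrime p) (LocalizedModule p.primeCompl C)

/-- Height of a prime ideal. -/
noncomputable def primeHeight (p : Ideal R) [hp : p.IsPrime] : ℕ∞ :=
  Order.height (⟨p, hp⟩ : PrimeSpectrum R)

/-- A totally `C`-reflexive module. -/
def IsTotallyCReflexive (C M : Type u) [AddCommGroup C] [Module R C]
    [AddCommGroup M] [Module R M] : Prop :=
  Module.Finite R M ∧
  Function.Bijective ((LinearMap.id : (M →ₗ[R] C) →ₗ[R] (M →ₗ[R] C)).flip) ∧
  ∀ i : ℕ, 0 < i →
    Subsingleton (extM R M C i) ∧ Subsingleton (extM R (M →ₗ[R] C) C i)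

/-- `G_C`-dimension of `M` is at most `n`. -/
def gcDimLE (C : Type u) [AddCommGroup C] [Module R C] :
    ℕ → (M : Type u) → [AddCommGroup M] → [Module R M] → Prop
  | 0, M, _, _ => IsTotallyCReflexive R C M
  | n+1, M, _, _ => ∃ (G K : Type u) (_ : AddCommGroup G) (_ : Module R G)
      (_ : AddCommGroup K) (_ : Module R K) (f : K →ₗ[R] G) (g : G →ₗ[R] M),
      IsTotallyCReflexive R C G ∧ Function.Injective f ∧ Function.Surjective g ∧
      LinearMap.range f = LinearMap.ker g ∧ gcDimLE C n K

/-- `M` has finite `G_C`-dimension. -/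
def HasFiniteGCDim (C M : Type u) [AddCommGroup C] [Module R C]
    [AddCommGroup M] [Module R M] : Prop :=
  ∃ n : ℕ, gcDimLE R C n M

/-- A finitely generated module over a local ring is Cohen-Macaulay if its depth
equals its Krull dimension. -/
def IsCohenMacaulayModule [IsLocalRing R] (M : Type u) [AddCommGroup M] [Module R M] : Prop :=
  Module.Finite R M ∧ (depth R M : WithBot ℕ∞) = Order.krullDim (Module.support R M)

/-- The `S`-module structure on `Hom_R(S, M)` through the domain, for an `R`-algebra `S`. -/
instance homDomModule (S : Type u) [CommRing S] [Algebra R S]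
    (M : Type u) [AddCommGroup M] [Module R M] : Module S (S →ₗ[R] M) where
  smul s f := f.comp (LinearMap.mul R S s)
  one_smul f := by ext x; show f (1 * x) = f x; rw [one_mul]
  mul_smul s t f := by ext x; show f (s * t * x) = f (t * (s * x)); ring_nf
  smul_zero s := by ext x; rfl
  smul_add s f g := by ext x; rfl
  add_smul s t f := by
    ext x; show f ((s + t) * x) = f (s * x) + f (t * x); rw [add_mul, map_add]
  zero_smul f := by ext x; show f (0 * x) = 0; rw [zero_mul, map_zero]

/-- The Bass number `μ^i(p, M) = dim_{k(p)} Ext^i_{R_p}(k(p), M_p)`. -/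
noncomputable def bassNumber (p : Ideal R) [p.IsPrime] (i : ℕ)
    (M : Type u) [AddCommGroup M] [Module R M] : ℕ∞ :=
  mLength (Localization.AtPrime p)
    (extM (Localization.AtPrime p) (IsLocalRing.ResidueField (Localization.AtPrime p))
      (LocalizedModule p.primeCompl M) i)

/-- The dual Bass number `π_i(p, M) = dim_{k(p)} Tor_i^{R_p}(k(p), Hom_R(R_p, M))`. -/
noncomputable def dualBassNumber (p : Ideal R) [p.IsPrime] (i : ℕ)
    (M : Type u) [AddCommGroup M] [Module R M] : ℕ∞ :=
  mLength (Localization.AtPrime p)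
    (torM (Localization.AtPrime p) (IsLocalRing.ResidueField (Localization.AtPrime p))
      (Localization.AtPrime p →ₗ[R] M) i)

/-- A cotorsion module: `Ext^1_R(F, M) = 0` for every flat module `F`. -/
def IsCotorsion (M : Type u) [AddCommGroup M] [Module R M] : Prop :=
  ∀ (F : Type u) (_ : AddCommGroup F) (_ : Module R F), Module.Flat R F →
    Subsingleton (extM R F M 1)

/-- A `C`-flat module: one isomorphic to `C ⊗_R F` with `F` flat. -/
def IsCFlat (C M : Type u) [AddCommGroup C] [Module R C] [AddCommGroup M] [Module R M] : Prop :=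
  ∃ (F : Type u) (_ : AddCommGroup F) (_ : Module R F), Module.Flat R F ∧
    Nonempty (M ≃ₗ[R] TensorProduct R C F)

/-- A `C`-injective module: one isomorphic to `Hom_R(C, I)` with `I` injective. -/
def IsCInjective (C M : Type u) [AddCommGroup C] [Module R C]
    [AddCommGroup M] [Module R M] : Prop :=
  ∃ (I : Type u) (_ : AddCommGroup I) (_ : Module R I), Module.Injective R I ∧
    Nonempty (M ≃ₗ[R] (C →ₗ[R] I))

/-- `φ : F → M` is a flat cover of `M`. -/
def IsFlatCover (M F : Type u) [AddCommGroup M] [Module R M] [AddCommGroup F] [Module R F]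
    (φ : F →ₗ[R] M) : Prop :=
  Module.Flat R F ∧
  (∀ (G : Type u) (_ : AddCommGroup G) (_ : Module R G), Module.Flat R G →
    ∀ ψ : G →ₗ[R] M, ∃ h : G →ₗ[R] F, φ.comp h = ψ) ∧
  (∀ ψ : F →ₗ[R] F, φ.comp ψ = φ → Function.Bijective ψ)

/-- `E` is an injective hull of `N`: `E` is injective and contains `N` as an
essential submodule. -/
def IsInjectiveHull (N E : Type u) [AddCommGroup N] [Module R N]
    [AddCommGroup E] [Module R E] : Prop :=
  Module.Injective R E ∧ ∃ ι : N →ₗ[R] E, Function.Injective ι ∧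
    ∀ K : Submodule R E, K ≠ ⊥ → K ⊓ LinearMap.range ι ≠ ⊥

end

/-! ### Comparison of the two constructions of `Ext` -/

section Bridge

variable {R : Type u} [CommRing R]

lemma extMk_zero_eq_zero {X Y : ModuleCat.{u} R} (P : ProjectiveResolution X)
    (f : P.complex.X 0 ⟶ Y) (m : ℕ) (hm : 0 + 1 = m) (hf : P.complex.d m 0 ≫ f = 0)
    (h : P.extMk f m hm hf = 0) : f = 0 := by
  open CochainComplex.HomComplex in
  rw [← P.extEquivCohomologyClass.apply_eq_iff_eq,
    P.extEquivCohomologyClass_extMk, P.extEquivCohomologyClass_zero,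
    CohomologyClass.mk_eq_zero_iff, Cocycle.toSingleMk_mem_coboundaries_iff _ _ _ _ _ 1 (by lia)] at h
  obtain ⟨g, hg⟩ := h
  have hz : Limits.IsZero (P.cochainComplex.X 1) := by
    exact P.cochainComplex.isZero_of_isStrictlyLE 0 1
  have : g = 0 := hz.eq_of_src _ _
  rw [this, Limits.comp_zero] at hg
  rw [← cancel_epi (P.cochainComplexXIso (-(0:ℕ)) 0 rfl).hom, Limits.comp_zero]
  exact hg.symm

lemma smul_extMk {X Y : ModuleCat.{u} R} (P : ProjectiveResolution X) {n : ℕ}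
    (f : P.complex.X n ⟶ Y) (m : ℕ) (hm : n + 1 = m) (hf : P.complex.d m n ≫ f = 0) (r : R) :
    P.extMk (r • f) m hm (by simp [hf]) = r • P.extMk f m hm hf := by
  rw [Abelian.Ext.smul_eq_comp_mk₀, P.extMk_comp_mk₀]
  congr 1

variable (R) in
/-- The derived functor `extM` and `Abelian.Ext` are isomorphic `R`-modules; the isomorphism sends
the class of a cocycle on a projective resolution to the corresponding class. -/
theorem extM_equiv (M N : Type u) [AddCommGroup M] [Module R M]
    [AddCommGroup N] [Module R N] (i : ℕ) :
    Nonempty (extM R M N i ≃ₗ[R] Abelian.Ext (ModuleCat.of R M) (ModuleCat.of R N) i) := by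
  let P := projectiveResolution (ModuleCat.of R M)
  let Y := ModuleCat.of R N
  let K := P.complex.linearYonedaObj R Y
  let S := K.sc i
  have hnext : i + 1 = (ComplexShape.up ℕ).next i := by simp
  have hg : ∀ f : S.X₂, S.g f = P.complex.d ((ComplexShape.up ℕ).next i) i ≫ f := fun f => rfl
  let φ : LinearMap.ker S.g.hom →ₗ[R] Abelian.Ext (ModuleCat.of R M) Y i :=
    { toFun := fun f => P.extMk (f.1 : P.complex.X i ⟶ Y) _ hnext (by
        exact f.2)
      map_add' := fun f g => by
        exact (P.add_extMk (f.1 : P.complex.X i ⟶ Y) (g.1 : P.complex.X i ⟶ Y) _ hnext f.2 g.2).symm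
      map_smul' := fun r f => by
        exact smul_extMk P (f.1 : P.complex.X i ⟶ Y) _ hnext f.2 r }
  have hφ : Function.Surjective φ := by
    intro α
    obtain ⟨f, hf, rfl⟩ := P.extMk_surjective α _ hnext
    exact ⟨⟨f, hf⟩, rfl⟩
  have hker : LinearMap.ker φ = LinearMap.range S.moduleCatToCycles := by
    ext f
    rw [LinearMap.mem_ker, LinearMap.mem_range]
    cases i with
    | zero =>
      constructor
      · intro h
        have := extMk_zero_eq_zero P (f.1 : P.complex.X 0 ⟶ Y) _ hnext f.2 h
        exact ⟨0, by rw [map_zero]; exact Subtype.ext this.symm⟩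
      · rintro ⟨y, rfl⟩
        have : S.moduleCatToCycles y = 0 := by
          apply Subtype.ext
          change P.complex.d 0 ((ComplexShape.up ℕ).prev 0) ≫ (y : _ ⟶ Y) = 0
          exact (congrArg (fun z => z ≫ (y : _ ⟶ Y)) (P.complex.shape _ _ (by simp))).trans
            Limits.zero_comp
        rw [this, map_zero]
    | succ p =>
      have hp : (ComplexShape.up ℕ).prev (p + 1) + 1 = p + 1 := by simp
      refine (P.extMk_eq_zero_iff (f.1 : P.complex.X (p + 1) ⟶ Y) _ hnext f.2 _ hp).trans ?_
      constructor
      · rintro ⟨g, hg⟩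
        exact ⟨g, Subtype.ext hg⟩
      · rintro ⟨g, hg⟩
        exact ⟨g, congrArg Subtype.val hg⟩
  exact ⟨(P.isoExt i Y ≪≫ S.moduleCatHomologyIso).toLinearEquiv ≪≫ₗ
    (Submodule.quotEquivOfEq _ _ hker.symm ≪≫ₗ φ.quotKerEquivOfSurjective hφ)⟩

end Bridge

/-! ### Vanishing of `Ext` along short exact sequences -/

section Vanishing

variable (R : Type u) [CommRing R]

/-- `Ext^i_R(M, N)` for unbundled modules. -/
abbrev E (M N : Type u) [AddCommGroup M] [Module R M] [AddCommGroup N] [Module R N] (i : ℕ) :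
    Type u :=
  Abelian.Ext (ModuleCat.of R M) (ModuleCat.of R N) i

/-- `Ext^i_R(M, N) = 0`. -/
def EV (M N : Type u) [AddCommGroup M] [Module R M] [AddCommGroup N] [Module R N] (i : ℕ) :
    Prop :=
  Subsingleton (E R M N i)

/-- `0 → A → B → Q → 0` is a short exact sequence of `R`-modules. -/
structure SES {A B Q : Type u} [AddCommGroup A] [AddCommGroup B] [AddCommGroup Q]
    [Module R A] [Module R B] [Module R Q] (f : A →ₗ[R] B) (g : B →ₗ[R] Q) : Prop where
  inj : Function.Injective f
  surj : Function.Surjective g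
  exact : Function.Exact f g

variable {R}
variable {A B Q M N : Type u} [AddCommGroup A] [AddCommGroup B] [AddCommGroup Q]
  [AddCommGroup M] [AddCommGroup N]
  [Module R A] [Module R B] [Module R Q] [Module R M] [Module R N]

lemma SES.comp_zero {f : A →ₗ[R] B} {g : B →ₗ[R] Q} (h : SES R f g) : g ∘ₗ f = 0 :=
  LinearMap.ext fun x => h.exact.apply_apply_eq_zero x

lemma SES.shortExact {f : A →ₗ[R] B} {g : B →ₗ[R] Q} (h : SES R f g) :
    (ModuleCat.shortComplexOfCompEqZero f g h.comp_zero).ShortExact :=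
  ModuleCat.shortComplex_shortExact _ h.exact h.inj h.surj

lemma SES.of_surj {g : B →ₗ[R] Q} (h : Function.Surjective g) :
    SES R (LinearMap.ker g).subtype g :=
  ⟨Subtype.val_injective, h, LinearMap.exact_subtype_ker_map g⟩

lemma SES.of_sub (L : Submodule R B) : SES R L.subtype L.mkQ :=
  ⟨Subtype.val_injective, L.mkQ_surjective, LinearMap.exact_subtype_mkQ L⟩

lemma ev_iff_extM {i : ℕ} : EV R M N i ↔ Subsingleton (extM R M N i) :=
  ((extM_equiv R M N i).some.toEquiv.subsingleton_congr).symm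

variable (R M N) in
/-- `Ext^0_R(M, N) = Hom_R(M, N)`. -/
noncomputable def e0 : E R M N 0 ≃ₗ[R] (M →ₗ[R] N) :=
  Abelian.Ext.linearEquiv₀.trans ModuleCat.homLinearEquiv

lemma ev_zero_iff : EV R M N 0 ↔ Subsingleton (M →ₗ[R] N) :=
  (e0 R M N).toEquiv.subsingleton_congr

lemma EV.eq_zero {i : ℕ} (h : EV R M N i) (x : E R M N i) : x = 0 :=
  @Subsingleton.elim _ h _ _

lemma ev_of_forall {i : ℕ} (h : ∀ x : E R M N i, x = 0) : EV R M N i :=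
  ⟨fun x y => (h x).trans (h y).symm⟩

lemma ev_proj [Module.Projective R M] (i : ℕ) : EV R M N (i + 1) := by
  have : Projective (ModuleCat.of R M) := ModuleCat.projective_of_categoryTheory_projective _
  exact Abelian.Ext.subsingleton_of_projective _ _ i

lemma ev_proj' [Module.Projective R M] {i : ℕ} (hi : 0 < i) : EV R M N i := by
  obtain ⟨j, rfl⟩ := Nat.exists_eq_add_of_lt hi
  rw [Nat.zero_add]; exact ev_proj j

lemma EV.congr_left {i : ℕ} (e : A ≃ₗ[R] B) (h : EV R A N i) : EV R B N i := by
  refine ev_of_forall fun x => ?_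
  have h1 : (Abelian.Ext.mk₀ (ModuleCat.ofHom e.toLinearMap)).comp x (zero_add i) = 0 := h.eq_zero _
  have h2 := congrArg (fun y => (Abelian.Ext.mk₀ (ModuleCat.ofHom e.symm.toLinearMap)).comp y
    (zero_add i)) h1
  simp only [Abelian.Ext.mk₀_comp_mk₀_assoc, Abelian.Ext.comp_zero, ← ModuleCat.ofHom_comp] at h2
  rw [← h2]
  have : e.toLinearMap ∘ₗ e.symm.toLinearMap = LinearMap.id := by ext; simp
  rw [this, ModuleCat.ofHom_id, Abelian.Ext.mk₀_id_comp]

lemma EV.congr_right {i : ℕ} (e : A ≃ₗ[R] B) (h : EV R M A i) : EV R M B i := by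
  refine ev_of_forall fun x => ?_
  have h1 : x.comp (Abelian.Ext.mk₀ (ModuleCat.ofHom e.symm.toLinearMap)) (add_zero i) = 0 :=
    h.eq_zero _
  have h2 := congrArg (fun y => y.comp (Abelian.Ext.mk₀ (ModuleCat.ofHom e.toLinearMap))
    (add_zero i)) h1
  simp only [Abelian.Ext.comp_assoc_of_third_deg_zero, Abelian.Ext.mk₀_comp_mk₀,
    Abelian.Ext.zero_comp, ← ModuleCat.ofHom_comp] at h2
  rw [← h2]
  have : e.toLinearMap ∘ₗ e.symm.toLinearMap = LinearMap.id := by ext; simp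
  rw [this, ModuleCat.ofHom_id, Abelian.Ext.comp_mk₀_id]

lemma ev_of_subsingleton_left [Subsingleton M] (i : ℕ) : EV R M N i := by
  refine ev_of_forall fun x => ?_
  have : 𝟙 (ModuleCat.of R M) = 0 := by ext x; exact Subsingleton.elim _ _
  rw [← Abelian.Ext.mk₀_id_comp x, this, Abelian.Ext.mk₀_zero, Abelian.Ext.zero_comp]

section Contra

variable {f : A →ₗ[R] B} {g : B →ₗ[R] Q}

lemma SES.ev_left (h : SES R f g) {i : ℕ} (hB : EV R B N i) (hQ : EV R Q N (i + 1)) :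
    EV R A N i := by
  refine ev_of_forall fun x => ?_
  obtain ⟨y, hy⟩ := Abelian.Ext.contravariant_sequence_exact₁ h.shortExact _ x (add_comm 1 i)
    (EV.eq_zero hQ _)
  rw [← hy, EV.eq_zero hB y, Abelian.Ext.comp_zero]

lemma SES.ev_mid (h : SES R f g) {i : ℕ} (hA : EV R A N i) (hQ : EV R Q N i) :
    EV R B N i := by
  refine ev_of_forall fun x => ?_
  obtain ⟨y, hy⟩ := Abelian.Ext.contravariant_sequence_exact₂ h.shortExact _ x (EV.eq_zero hA _)
  rw [← hy, EV.eq_zero hQ y, Abelian.Ext.comp_zero]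

lemma SES.ev_right (h : SES R f g) {i : ℕ} (hA : EV R A N i) (hB : EV R B N (i + 1)) :
    EV R Q N (i + 1) := by
  refine ev_of_forall fun x => ?_
  obtain ⟨y, hy⟩ := Abelian.Ext.contravariant_sequence_exact₃ h.shortExact _ x
    (EV.eq_zero hB _) (add_comm 1 i)
  rw [← hy, EV.eq_zero hA y, Abelian.Ext.comp_zero]

/-- If `Ext^1(Q, N) = 0`, maps `A → N` extend to `B`. -/
lemma SES.extend (h : SES R f g) (hQ : EV R Q N 1) (φ : A →ₗ[R] N) :
    ∃ ψ : B →ₗ[R] N, ψ ∘ₗ f = φ := by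
  obtain ⟨y, hy⟩ := Abelian.Ext.contravariant_sequence_exact₁ h.shortExact (ModuleCat.of R N)
    (Abelian.Ext.mk₀ (ModuleCat.ofHom φ)) (add_zero 1) (EV.eq_zero hQ _)
  refine ⟨e0 R B N y, ?_⟩
  obtain ⟨ψ, rfl⟩ := Abelian.Ext.addEquiv₀.symm.surjective y
  rw [Abelian.Ext.addEquiv₀_symm_apply, Abelian.Ext.mk₀_comp_mk₀] at hy
  have h2 := congrArg ModuleCat.Hom.hom (Abelian.Ext.addEquiv₀.symm.injective hy)
  have h3 : e0 R B N (Abelian.Ext.addEquiv₀.symm ψ) = ψ.hom :=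
    congrArg ModuleCat.Hom.hom (Abelian.Ext.addEquiv₀.apply_symm_apply ψ)
  rw [h3]
  exact h2

/-- If maps `A → N` extend to `B` and `Ext^1(B, N) = 0` then `Ext^1(Q, N) = 0`. -/
lemma SES.ev_one (h : SES R f g) (hB : EV R B N 1)
    (hext : ∀ φ : A →ₗ[R] N, ∃ ψ : B →ₗ[R] N, ψ ∘ₗ f = φ) : EV R Q N 1 := by
  refine ev_of_forall fun x => ?_
  obtain ⟨y, hy⟩ := Abelian.Ext.contravariant_sequence_exact₃ h.shortExact _ x
    (EV.eq_zero hB _) (add_zero 1)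
  obtain ⟨φ, rfl⟩ := Abelian.Ext.addEquiv₀.symm.surjective y
  obtain ⟨ψ, hψ⟩ := hext φ.hom
  have : φ = ModuleCat.ofHom f ≫ ModuleCat.ofHom ψ := by
    rw [← ModuleCat.ofHom_comp, hψ]; rfl
  rw [← hy, this, Abelian.Ext.addEquiv₀_symm_apply, ← Abelian.Ext.mk₀_comp_mk₀]
  exact h.shortExact.extClass_comp_assoc (Abelian.Ext.mk₀ (ModuleCat.ofHom ψ))

end Contra

section Co

variable {f : A →ₗ[R] B} {g : B →ₗ[R] Q}

lemma SES.ev_left' (h : SES R f g) {i : ℕ} (hB : EV R M B (i + 1)) (hQ : EV R M Q i) :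
    EV R M A (i + 1) := by
  refine ev_of_forall fun x => ?_
  obtain ⟨y, hy⟩ := Abelian.Ext.covariant_sequence_exact₁ _ h.shortExact x (EV.eq_zero hB _) rfl
  rw [← hy, EV.eq_zero hQ y, Abelian.Ext.zero_comp]

lemma SES.ev_mid' (h : SES R f g) {i : ℕ} (hA : EV R M A i) (hQ : EV R M Q i) :
    EV R M B i := by
  refine ev_of_forall fun x => ?_
  obtain ⟨y, hy⟩ := Abelian.Ext.covariant_sequence_exact₂ _ h.shortExact x (EV.eq_zero hQ _)
  rw [← hy, EV.eq_zero hA y, Abelian.Ext.zero_comp]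

lemma SES.ev_right' (h : SES R f g) {i : ℕ} (hA : EV R M A (i + 1)) (hB : EV R M B i) :
    EV R M Q i := by
  refine ev_of_forall fun x => ?_
  obtain ⟨y, hy⟩ := Abelian.Ext.covariant_sequence_exact₃ _ h.shortExact x rfl (EV.eq_zero hA _)
  rw [← hy, EV.eq_zero hB y, Abelian.Ext.zero_comp]

end Co

end Vanishing

/-! ### Totally reflexive modules and short exact sequences -/

section Duality

variable {R : Type u} [CommRing R]
variable {A B Q A' B' Q' M N : Type u} [AddCommGroup A] [AddCommGroup B] [AddCommGroup Q]
  [AddCommGroup A'] [AddCommGroup B'] [AddCommGroup Q'] [AddCommGroup M] [AddCommGroup N]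
  [Module R A] [Module R B] [Module R Q] [Module R A'] [Module R B'] [Module R Q']
  [Module R M] [Module R N]

section Five

variable {f : A →ₗ[R] B} {g : B →ₗ[R] Q} {f' : A' →ₗ[R] B'} {g' : B' →ₗ[R] Q'}
  {a : A →ₗ[R] A'} {b : B →ₗ[R] B'} {q : Q →ₗ[R] Q'}

/-- The five lemma for a map of short exact sequences. -/
lemma SES.bij_mid (h : SES R f g) (h' : SES R f' g') (h₁ : ∀ x, b (f x) = f' (a x))
    (h₂ : ∀ y, q (g y) = g' (b y)) (ha : Function.Bijective a) (hq : Function.Bijective q) :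
    Function.Bijective b := by
  constructor
  · rw [injective_iff_map_eq_zero]
    intro y hy
    have : g y = 0 := (injective_iff_map_eq_zero q).1 hq.1 _ (by rw [h₂, hy, map_zero])
    obtain ⟨x, rfl⟩ := (h.exact y).1 this
    rw [h₁] at hy
    rw [(injective_iff_map_eq_zero a).1 ha.1 x
      ((injective_iff_map_eq_zero f').1 h'.inj _ hy), map_zero]
  · intro y'
    obtain ⟨z, hz⟩ := hq.2 (g' y')
    obtain ⟨y, rfl⟩ := h.surj z
    have : g' (y' - b y) = 0 := by rw [map_sub, ← hz, h₂, sub_self]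
    obtain ⟨x', hx'⟩ := (h'.exact _).1 this
    obtain ⟨x, rfl⟩ := ha.2 x'
    exact ⟨y + f x, by rw [map_add, h₁, hx']; abel⟩

lemma SES.bij_left (h : SES R f g) (h' : SES R f' g') (h₁ : ∀ x, b (f x) = f' (a x))
    (h₂ : ∀ y, q (g y) = g' (b y)) (hb : Function.Bijective b) (hq : Function.Bijective q) :
    Function.Bijective a := by
  constructor
  · intro x y hxy
    apply h.inj
    apply hb.1
    rw [h₁, h₁, hxy]
  · intro x'
    obtain ⟨y, hy⟩ := hb.2 (f' x')
    have : g y = 0 := (injective_iff_map_eq_zero q).1 hq.1 _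
      (by rw [h₂, hy, h'.exact.apply_apply_eq_zero])
    obtain ⟨x, rfl⟩ := (h.exact y).1 this
    exact ⟨x, h'.inj (by rw [← h₁, hy])⟩

lemma SES.bij_right (h : SES R f g) (h' : SES R f' g') (h₁ : ∀ x, b (f x) = f' (a x))
    (h₂ : ∀ y, q (g y) = g' (b y)) (ha : Function.Bijective a) (hb : Function.Bijective b) :
    Function.Bijective q := by
  constructor
  · rw [injective_iff_map_eq_zero]
    intro z hz
    obtain ⟨y, rfl⟩ := h.surj z
    rw [h₂] at hz
    obtain ⟨x', hx'⟩ := (h'.exact _).1 hz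
    obtain ⟨x, rfl⟩ := ha.2 x'
    rw [← h₁] at hx'
    rw [← hb.1 hx', h.exact.apply_apply_eq_zero]
  · intro z'
    obtain ⟨y', rfl⟩ := h'.surj z'
    obtain ⟨y, rfl⟩ := hb.2 y'
    exact ⟨g y, h₂ y⟩

end Five

variable (R) (C : Type u) [AddCommGroup C] [Module R C]

/-- The map `Hom(N, C) → Hom(M, C)` induced by `f : M → N`. -/
abbrev dualMapC (f : M →ₗ[R] N) : (N →ₗ[R] C) →ₗ[R] (M →ₗ[R] C) := LinearMap.lcomp R C f

/-- The evaluation map `M → Hom(Hom(M, C), C)`. -/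
abbrev evalC (M : Type u) [AddCommGroup M] [Module R M] : M →ₗ[R] ((M →ₗ[R] C) →ₗ[R] C) :=
  (LinearMap.id : (M →ₗ[R] C) →ₗ[R] (M →ₗ[R] C)).flip

variable {R C}

lemma SES.dual_exact {f : A →ₗ[R] B} {g : B →ₗ[R] Q} (h : SES R f g) :
    Function.Exact (dualMapC R C g) (dualMapC R C f) := by
  intro φ
  constructor
  · intro hφ
    have hle : LinearMap.ker g ≤ LinearMap.ker φ := by
      intro y hy
      obtain ⟨x, rfl⟩ := (h.exact y).1 hy
      exact LinearMap.congr_fun hφ x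
    refine ⟨(Submodule.liftQ _ φ hle) ∘ₗ
      (LinearMap.quotKerEquivOfSurjective g h.surj).symm.toLinearMap, ?_⟩
    ext y
    have : (LinearMap.quotKerEquivOfSurjective g h.surj).symm (g y) =
        Submodule.Quotient.mk y := by
      rw [LinearEquiv.symm_apply_eq]; rfl
    simp [this]
  · rintro ⟨ψ, rfl⟩
    ext x
    simp [h.exact.apply_apply_eq_zero]

lemma SES.dual {f : A →ₗ[R] B} {g : B →ₗ[R] Q} (h : SES R f g) (hQ : EV R Q C 1) :
    SES R (dualMapC R C g) (dualMapC R C f) where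
  inj := LinearMap.lcomp_injective_of_surjective g h.surj
  surj φ := h.extend hQ φ
  exact := h.dual_exact

variable (R C) in
/-- Total `C`-reflexivity, phrased with `Abelian.Ext`. -/
structure TR (M : Type u) [AddCommGroup M] [Module R M] : Prop where
  fin : Module.Finite R M
  bij : Function.Bijective (evalC R C M)
  ext : ∀ i, 0 < i → EV R M C i
  ext_dual : ∀ i, 0 < i → EV R (M →ₗ[R] C) C i

lemma tr_iff : TR R C M ↔ IsTotallyCReflexive R C M := by
  constructor
  · rintro ⟨h1, h2, h3, h4⟩
    exact ⟨h1, h2, fun i hi => ⟨ev_iff_extM.1 (h3 i hi), ev_iff_extM.1 (h4 i hi)⟩⟩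
  · rintro ⟨h1, h2, h3⟩
    exact ⟨h1, h2, fun i hi => ev_iff_extM.2 (h3 i hi).1, fun i hi => ev_iff_extM.2 (h3 i hi).2⟩

lemma TR.congr (e : M ≃ₗ[R] N) (h : TR R C M) : TR R C N := by
  have := h.fin
  refine ⟨Module.Finite.equiv e, ?_, fun i hi => (h.ext i hi).congr_left e,
    fun i hi => (h.ext_dual i hi).congr_left (LinearEquiv.arrowCongr e (LinearEquiv.refl R C))⟩
  have hs : evalC R C N = (LinearEquiv.arrowCongr (LinearEquiv.arrowCongr e (LinearEquiv.refl R C))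
      (LinearEquiv.refl R C)).toLinearMap ∘ₗ evalC R C M ∘ₗ e.symm.toLinearMap := by
    ext n φ
    simp
  rw [hs, LinearMap.coe_comp, LinearMap.coe_comp]
  exact (LinearEquiv.bijective _).comp (h.bij.comp e.symm.bijective)

lemma tr_of_subsingleton [Subsingleton M] : TR R C M := by
  have : Subsingleton (M →ₗ[R] C) := ⟨fun f g => by ext x; rw [Subsingleton.elim x 0]; simp⟩
  have : Subsingleton ((M →ₗ[R] C) →ₗ[R] C) :=
    ⟨fun f g => by ext x; rw [Subsingleton.elim x 0]; simp⟩
  exact ⟨inferInstance, ⟨fun _ _ _ => Subsingleton.elim _ _,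
    fun x => ⟨0, Subsingleton.elim _ _⟩⟩, fun i _ => ev_of_subsingleton_left i,
    fun i _ => ev_of_subsingleton_left i⟩

section

variable {f : A →ₗ[R] B} {g : B →ₗ[R] Q}

lemma SES.tr_mid (h : SES R f g) (hA : TR R C A) (hQ : TR R C Q) : TR R C B := by
  have hd := h.dual (hQ.ext 1 one_pos)
  have hdd := hd.dual (hA.ext_dual 1 one_pos)
  have := hA.fin
  have := hQ.fin
  refine ⟨Module.Finite.of_exact h.exact h.surj,
    h.bij_mid hdd (fun _ => rfl) (fun _ => rfl) hA.bij hQ.bij,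
    fun i hi => h.ev_mid (hA.ext i hi) (hQ.ext i hi),
    fun i hi => hd.ev_mid (hQ.ext_dual i hi) (hA.ext_dual i hi)⟩

/-- Kernels of epimorphisms between totally reflexive modules are totally reflexive. -/
lemma SES.tr_left [IsNoetherianRing R] (h : SES R f g) (hB : TR R C B) (hQ : TR R C Q) : TR R C A := by
  have hd := h.dual (hQ.ext 1 one_pos)
  have h1 : EV R (A →ₗ[R] C) C 1 := by
    refine hd.ev_one (hB.ext_dual 1 one_pos) fun φ => ?_
    obtain ⟨q, rfl⟩ := hQ.bij.2 φ
    obtain ⟨b, rfl⟩ := h.surj q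
    exact ⟨evalC R C B b, rfl⟩
  have hdd := hd.dual h1
  have := hB.fin
  refine ⟨Module.Finite.of_injective f h.inj,
    h.bij_left hdd (fun _ => rfl) (fun _ => rfl) hB.bij hQ.bij,
    fun i hi => h.ev_left (hB.ext i hi) (hQ.ext _ (by lia)), fun i hi => ?_⟩
  obtain _ | _ | i := i
  · lia
  · exact h1
  · exact hd.ev_right (hQ.ext_dual _ (by lia)) (hB.ext_dual _ (by lia))

/-- A cokernel of totally reflexive modules is totally reflexive once its `Ext` into `C` vanishes. -/
lemma SES.tr_right (h : SES R f g) (hA : TR R C A) (hB : TR R C B)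
    (hQ : ∀ i, 0 < i → EV R Q C i) : TR R C Q := by
  have hd := h.dual (hQ 1 one_pos)
  have hdd := hd.dual (hA.ext_dual 1 one_pos)
  have := hB.fin
  exact ⟨Module.Finite.of_surjective g h.surj,
    h.bij_right hdd (fun _ => rfl) (fun _ => rfl) hA.bij hB.bij, hQ,
    fun i hi => hd.ev_left (hB.ext_dual i hi) (hA.ext_dual _ (by lia))⟩

end

variable (R C) in
/-- The semidualizing property, phrased with `Abelian.Ext`. -/
structure SD : Prop where
  fin : Module.Finite R C
  bij : Function.Bijective (fun r : R => r • (LinearMap.id : C →ₗ[R] C))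
  ext : ∀ i, 0 < i → EV R C C i

lemma sd_iff : SD R C ↔ IsSemidualizing R C :=
  ⟨fun h => ⟨h.fin, h.bij, fun i hi => ev_iff_extM.1 (h.ext i hi)⟩,
    fun h => ⟨h.1, h.2.1, fun i hi => ev_iff_extM.2 (h.2.2 i hi)⟩⟩

variable (C) in
/-- `Hom(F, C) = C` for `F` free of rank one. -/
noncomputable def rankOneDual (e : M ≃ₗ[R] R) : (M →ₗ[R] C) ≃ₗ[R] C :=
  LinearEquiv.ofBijective (LinearMap.applyₗ (e.symm 1)) (by
    constructor
    · intro φ ψ h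
      ext m
      have : m = e m • e.symm 1 := by rw [← map_smul, smul_eq_mul, mul_one, e.symm_apply_apply]
      rw [this, map_smul, map_smul]
      exact congrArg _ h
    · intro c
      exact ⟨LinearMap.toSpanSingleton R C c ∘ₗ e.toLinearMap, by simp⟩)

@[simp] lemma rankOneDual_apply (e : M ≃ₗ[R] R) (φ : M →ₗ[R] C) :
    rankOneDual C e φ = φ (e.symm 1) := rfl

lemma SD.tr_rank_one (h : SD R C) (e : M ≃ₗ[R] R) : TR R C M := by
  refine ⟨Module.Finite.equiv e.symm, ?_, fun i hi => ?_,
    fun i hi => (h.ext i hi).congr_left (rankOneDual C e).symm⟩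
  · let e' : ((M →ₗ[R] C) →ₗ[R] C) ≃ₗ[R] (C →ₗ[R] C) :=
      LinearEquiv.arrowCongr (rankOneDual C e) (LinearEquiv.refl R C)
    have : (e' ∘ evalC R C M) ∘ e.symm = fun r : R => r • (LinearMap.id : C →ₗ[R] C) := by
      ext r c
      have hs : (rankOneDual C e).symm c (e.symm 1) = c := (rankOneDual C e).apply_symm_apply c
      have : e.symm r = r • e.symm 1 := by rw [← map_smul, smul_eq_mul, mul_one]
      simp [e', this, hs]
    have h2 : Function.Bijective ((e' ∘ evalC R C M) ∘ e.symm) := this ▸ h.bij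
    exact (Function.Bijective.of_comp_iff' e'.bijective _).1
      ((Function.Bijective.of_comp_iff _ e.symm.bijective).1 h2)
  · have : Module.Projective R M := Module.Projective.of_equiv e.symm
    exact ev_proj' hi

lemma SD.tr_free (h : SD R C) : ∀ b : ℕ, TR R C (Fin b → R)
  | 0 => tr_of_subsingleton
  | b + 1 => by
    have hs : SES R (LinearMap.inl R R (Fin b → R)) (LinearMap.snd R R (Fin b → R)) :=
      ⟨LinearMap.inl_injective, LinearMap.snd_surjective, Function.Exact.inl_snd⟩
    exact (hs.tr_mid (h.tr_rank_one (LinearEquiv.refl R R)) (h.tr_free b)).congr (Fin.consLinearEquiv R fun _ => R)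

lemma SD.tr_self (h : SD R C) : TR R C C := by
  have hb : Function.Bijective (LinearMap.toSpanSingleton R (C →ₗ[R] C) LinearMap.id) := h.bij
  let e := LinearEquiv.ofBijective _ hb
  have hp : Module.Projective R (C →ₗ[R] C) := Module.Projective.of_equiv e
  refine ⟨h.fin, ?_, h.ext, fun i hi => ev_proj' hi⟩
  let e' := rankOneDual C e.symm
  have : e' ∘ evalC R C C = id := by
    ext c
    simp [e', e]
  exact (Function.Bijective.of_comp_iff' e'.bijective _).1 (this ▸ Function.bijective_id)

end Duality

/-! ### Finite resolutions ending in a totally reflexive module -/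

section Resolutions

variable (R : Type u) [CommRing R] (C : Type u) [AddCommGroup C] [Module R C]

/-- `FR R C n M`: the `n`-th syzygy in some resolution of `M` by finite free modules is totally
`C`-reflexive. For semidualizing `C` over a Noetherian ring this is `G_C`-dimension at most `n`,
but resolving by free modules makes it easier to manipulate. -/
def FR : ℕ → (M : Type u) → [AddCommGroup M] → [Module R M] → Prop
  | 0, M, _, _ => TR R C M
  | n + 1, M, _, _ => ∃ (b : ℕ) (g : (Fin b → R) →ₗ[R] M), Function.Surjective g ∧
      FR n (LinearMap.ker g)

variable {R C}
variable {A B Q F M N : Type u} [AddCommGroup A] [AddCommGroup B] [AddCommGroup Q]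
  [AddCommGroup F] [AddCommGroup M] [AddCommGroup N]
  [Module R A] [Module R B] [Module R Q] [Module R F] [Module R M] [Module R N]

lemma FR.fin : ∀ {n : ℕ}, FR R C n M → Module.Finite R M
  | 0, h => TR.fin h
  | _ + 1, ⟨_, g, hg, _⟩ => Module.Finite.of_surjective g hg

lemma FR.congr {n : ℕ} (e : M ≃ₗ[R] N) (h : FR R C n M) : FR R C n N := by
  induction n generalizing M N with
  | zero => exact TR.congr e h
  | succ n ih =>
    obtain ⟨b, g, hg, h⟩ := h
    refine ⟨b, e.toLinearMap ∘ₗ g, e.surjective.comp hg, ih (LinearEquiv.ofEq _ _ ?_) h⟩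
    ext x; simp

/-- The isomorphism of the kernel term of a short exact sequence with the kernel. -/
noncomputable def SES.kerEquiv {f : A →ₗ[R] B} {g : B →ₗ[R] Q} (h : SES R f g) :
    A ≃ₗ[R] LinearMap.ker g :=
  (LinearEquiv.ofInjective f h.inj).trans (LinearEquiv.ofEq _ _ h.exact.linearMap_ker_eq.symm)

lemma SES.fr_succ {f : A →ₗ[R] F} {g : F →ₗ[R] M} (h : SES R f g) {b n : ℕ}
    (e : (Fin b → R) ≃ₗ[R] F) (hA : FR R C n A) : FR R C (n + 1) M := by
  refine ⟨b, g ∘ₗ e.toLinearMap, h.surj.comp e.surjective, (hA.congr h.kerEquiv).congr ?_⟩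
  refine (e.symm.submoduleMap (LinearMap.ker g)).trans (LinearEquiv.ofEq _ _ ?_)
  ext x
  simp

/-- `R^a × R^c` is free of rank `a + c`. -/
noncomputable def prodFree (a c : ℕ) : (Fin (a + c) → R) ≃ₗ[R] (Fin a → R) × (Fin c → R) :=
  (LinearEquiv.funCongrLeft R R finSumFinEquiv).trans
    (LinearEquiv.sumArrowLequivProdArrow (Fin a) (Fin c) R R)

/-- Kernels of a composite `g ∘ p` with `p` surjective: `0 → ker p → ker (g ∘ p) → ker g → 0`. -/
lemma exists_ses_ker_comp (g : B →ₗ[R] Q) {p : F →ₗ[R] B} (hp : Function.Surjective p) :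
    ∃ (i : LinearMap.ker p →ₗ[R] LinearMap.ker (g ∘ₗ p))
      (j : LinearMap.ker (g ∘ₗ p) →ₗ[R] LinearMap.ker g), SES R i j := by
  refine ⟨Submodule.inclusion (fun x hx => by rw [LinearMap.mem_ker] at hx ⊢; simp [hx]),
    p.restrict (fun x hx => hx), Submodule.inclusion_injective _, ?_, ?_⟩
  · rintro ⟨y, hy⟩
    obtain ⟨x, rfl⟩ := hp y
    exact ⟨⟨x, hy⟩, rfl⟩
  · rintro ⟨x, hx⟩
    constructor
    · intro h0
      exact ⟨⟨x, congrArg Subtype.val h0⟩, rfl⟩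
    · rintro ⟨⟨y, hy⟩, hyx⟩
      rw [← hyx]; exact Subtype.ext hy

lemma exists_cover (M : Type u) [AddCommGroup M] [Module R M] [Module.Finite R M] :
    ∃ (b : ℕ) (g : (Fin b → R) →ₗ[R] M), Function.Surjective g :=
  Module.Finite.exists_fin' R M

/-- The class `FR n` is closed under extensions, by the horseshoe lemma. -/
lemma SES.fr_mid {f : A →ₗ[R] B} {g : B →ₗ[R] Q} (h : SES R f g) {n : ℕ}
    (hA : FR R C n A) (hQ : FR R C n Q) : FR R C n B := by
  induction n generalizing A B Q with
  | zero => exact h.tr_mid hA hQ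
  | succ n ih =>
    obtain ⟨a, p, hp, hA⟩ := hA
    obtain ⟨c, q, hq, hQ⟩ := hQ
    obtain ⟨q', hq'⟩ := Module.projective_lifting_property g q h.surj
    have hq'' : ∀ z, g (q' z) = q z := fun z => LinearMap.congr_fun hq' z
    let t : (Fin a → R) × (Fin c → R) →ₗ[R] B := (f ∘ₗ p).coprod q'
    have ht : ∀ x z, t (x, z) = f (p x) + q' z := fun x z => by simp [t]
    have hts : Function.Surjective t := by
      intro y
      obtain ⟨z, hz⟩ := hq (g y)
      have : g (y - q' z) = 0 := by rw [map_sub, hq'', hz, sub_self]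
      obtain ⟨x, hx⟩ := (h.exact _).1 this
      obtain ⟨w, rfl⟩ := hp x
      exact ⟨(w, z), by rw [ht, hx]; abel⟩
    have hgt : ∀ x z, g (t (x, z)) = q z := fun x z => by
      rw [ht, map_add, h.exact.apply_apply_eq_zero, hq'', zero_add]
    let i : LinearMap.ker p →ₗ[R] LinearMap.ker t :=
      (LinearMap.inl R (Fin a → R) (Fin c → R)).restrict (fun x hx => by
        rw [LinearMap.mem_ker] at hx ⊢
        simp [ht, hx])
    let j : LinearMap.ker t →ₗ[R] LinearMap.ker q :=
      (LinearMap.snd R (Fin a → R) (Fin c → R)).restrict (fun x hx => by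
        rw [LinearMap.mem_ker] at hx ⊢
        rw [LinearMap.snd_apply, ← hgt x.1, hx, map_zero])
    have hij : SES R i j := by
      refine ⟨?_, ?_, ?_⟩
      · intro x y hxy
        have := congrArg (fun w => w.1.1) hxy
        exact Subtype.ext this
      · rintro ⟨z, hz⟩
        have hz' : q z = 0 := hz
        have : g (q' z) = 0 := by rw [hq'', hz']
        obtain ⟨x, hx⟩ := (h.exact _).1 this
        obtain ⟨w, rfl⟩ := hp x
        refine ⟨⟨(-w, z), ?_⟩, rfl⟩
        rw [LinearMap.mem_ker, ht, map_neg, map_neg, hx]; abel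
      · rintro ⟨⟨x, z⟩, hxz⟩
        constructor
        · intro h0
          have hz : z = 0 := congrArg Subtype.val h0
          subst hz
          rw [LinearMap.mem_ker, ht, map_zero, add_zero] at hxz
          have : p x = 0 := h.inj (by rw [hxz, map_zero])
          exact ⟨⟨x, this⟩, rfl⟩
        · rintro ⟨y, hy⟩
          rw [← hy]; rfl
    exact (SES.of_surj hts).fr_succ (prodFree a c) (ih hij hA hQ)

section

variable [IsNoetherianRing R]

lemma TR.fr (hC : SD R C) (h : TR R C M) (n : ℕ) : FR R C n M := by
  induction n generalizing M with
  | zero => exact h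
  | succ n ih =>
    have := h.fin
    obtain ⟨b, g, hg⟩ := exists_cover (R := R) M
    exact ⟨b, g, hg, ih ((SES.of_surj hg).tr_left (hC.tr_free b) h)⟩

lemma FR.succ (hC : SD R C) {n : ℕ} (h : FR R C n M) : FR R C (n + 1) M := by
  induction n generalizing M with
  | zero => exact TR.fr hC h 1
  | succ n ih =>
    obtain ⟨b, g, hg, h⟩ := h
    exact ⟨b, g, hg, ih h⟩

lemma FR.mono (hC : SD R C) {n m : ℕ} (hnm : n ≤ m) (h : FR R C n M) : FR R C m M := by
  induction m, hnm using Nat.le_induction with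
  | base => exact h
  | succ m _ ih => exact ih.succ hC

/-- A module with a totally reflexive cover whose kernel is in `FR n` is in `FR (n + 1)`. -/
lemma SES.fr_cover (hC : SD R C) {f : A →ₗ[R] B} {g : B →ₗ[R] Q} (h : SES R f g) {n : ℕ}
    (hA : FR R C n A) (hB : TR R C B) : FR R C (n + 1) Q := by
  have := hB.fin
  obtain ⟨b, q, hq⟩ := exists_cover (R := R) B
  have hK := (SES.of_surj hq).tr_left (hC.tr_free b) hB
  refine ⟨b, g ∘ₗ q, h.surj.comp hq, ?_⟩
  obtain ⟨i, j, hij⟩ := exists_ses_ker_comp g hq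
  exact hij.fr_mid (hK.fr hC n) (hA.congr h.kerEquiv)

lemma SES.fr_left (hC : SD R C) {f : A →ₗ[R] B} {g : B →ₗ[R] Q} (h : SES R f g) {n : ℕ}
    (hB : FR R C n B) (hQ : TR R C Q) : FR R C n A := by
  cases n with
  | zero => exact h.tr_left hB hQ
  | succ n =>
    obtain ⟨b, p, hp, hB⟩ := hB
    have hG := (SES.of_surj (g := g ∘ₗ p) (h.surj.comp hp)).tr_left (hC.tr_free b) hQ
    obtain ⟨i, j, hij⟩ := exists_ses_ker_comp g hp
    exact (hij.fr_cover hC hB hG).congr h.kerEquiv.symm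

/-- A resolution by totally reflexive modules may be replaced by one whose terms are free, except
for the last. -/
lemma fr_of_gcDimLE (hC : SD R C) {n : ℕ} (h : gcDimLE R C n M) : FR R C n M := by
  induction n generalizing M with
  | zero => exact tr_iff.2 h
  | succ n ih =>
    obtain ⟨G, K, _, _, _, _, f, g, hG, hf, hg, hfg, hK⟩ := h
    exact SES.fr_cover hC ⟨hf, hg, LinearMap.exact_iff.2 hfg.symm⟩ (ih hK) (tr_iff.2 hG)

/-- The kernel of every finite free cover of a module in `FR (n + 1)` is in `FR n`. -/
lemma FR.ker_cover (hC : SD R C) {n : ℕ} (hM : FR R C (n + 1) M) {b : ℕ}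
    {g : (Fin b → R) →ₗ[R] M} (hg : Function.Surjective g) : FR R C n (LinearMap.ker g) := by
  obtain ⟨a, p, hp, hK⟩ := hM
  -- the pullback of the two covers
  let t : (Fin a → R) × (Fin b → R) →ₗ[R] M := p.coprod (-g)
  have ht : ∀ x z, t (x, z) = p x - g z := fun x z => by simp [t, sub_eq_add_neg]
  let X := LinearMap.ker t
  have hX : ∀ w : X, p w.1.1 = g w.1.2 := fun w => by
    have := w.2
    rw [LinearMap.mem_ker, ht] at this
    exact sub_eq_zero.1 this
  let i₁ : LinearMap.ker p →ₗ[R] X := (LinearMap.inl R (Fin a → R) (Fin b → R)).restrict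
    (fun x hx => by
      rw [LinearMap.mem_ker] at hx ⊢
      simp [ht, hx])
  let i₂ : LinearMap.ker g →ₗ[R] X := (LinearMap.inr R (Fin a → R) (Fin b → R)).restrict
    (fun x hx => by
      rw [LinearMap.mem_ker] at hx ⊢
      simp [ht, hx])
  have h₁ : SES R i₁ (LinearMap.snd R _ _ ∘ₗ X.subtype) := by
    refine ⟨fun x y hxy => Subtype.ext (congrArg (fun w => w.1.1) hxy), fun z => ?_, ?_⟩
    · obtain ⟨x, hx⟩ := hp (g z)
      exact ⟨⟨(x, z), by rw [LinearMap.mem_ker, ht, hx, sub_self]⟩, rfl⟩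
    · rintro ⟨⟨x, z⟩, hxz⟩
      constructor
      · intro h0
        have hz : z = 0 := h0
        subst hz
        have := hX ⟨(x, 0), hxz⟩
        exact ⟨⟨x, by simpa using this⟩, rfl⟩
      · rintro ⟨y, hy⟩
        rw [← hy]; rfl
  have h₂ : SES R i₂ (LinearMap.fst R _ _ ∘ₗ X.subtype) := by
    refine ⟨fun x y hxy => Subtype.ext (congrArg (fun w => w.1.2) hxy), fun x => ?_, ?_⟩
    · obtain ⟨z, hz⟩ := hg (p x)
      exact ⟨⟨(x, z), by rw [LinearMap.mem_ker, ht, hz, sub_self]⟩, rfl⟩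
    · rintro ⟨⟨x, z⟩, hxz⟩
      constructor
      · intro h0
        have hz : x = 0 := h0
        subst hz
        have := hX ⟨(0, z), hxz⟩
        exact ⟨⟨z, by simpa using this.symm⟩, rfl⟩
      · rintro ⟨y, hy⟩
        rw [← hy]; rfl
  exact h₂.fr_left hC (h₁.fr_mid hK ((hC.tr_free b).fr hC n)) (hC.tr_free a)

/-- If two terms of a short exact sequence are in `FR n`, the cokernel is in `FR (n + 1)`. -/
lemma SES.fr_right (hC : SD R C) {f : A →ₗ[R] B} {g : B →ₗ[R] Q} (h : SES R f g) {n : ℕ}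
    (hA : FR R C n A) (hB : FR R C n B) : FR R C (n + 1) Q := by
  obtain ⟨b, q, hq, hK⟩ := hB.succ hC
  refine ⟨b, g ∘ₗ q, h.surj.comp hq, ?_⟩
  obtain ⟨i, j, hij⟩ := exists_ses_ker_comp g hq
  exact hij.fr_mid hK (hA.congr h.kerEquiv)

end

lemma FR.ev {n : ℕ} (h : FR R C n M) {i : ℕ} (hi : n < i) : EV R M C i := by
  induction n generalizing M i with
  | zero => exact TR.ext h i hi
  | succ n ih =>
    obtain ⟨b, g, hg, h⟩ := h
    obtain _ | i := i
    · lia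
    · exact (SES.of_surj hg).ev_right (ih h (by lia)) (ev_proj i)

/-- A module of finite `G_C`-dimension with `Ext^i(M, C) = 0` for `i > 0` is totally reflexive. -/
lemma FR.tr_of_ev (hC : SD R C) {n : ℕ} (h : FR R C n M) (hM : ∀ i, 0 < i → EV R M C i) :
    TR R C M := by
  induction n generalizing M with
  | zero => exact h
  | succ n ih =>
    obtain ⟨b, g, hg, h⟩ := h
    have hs := SES.of_surj hg
    exact hs.tr_right (ih h fun i hi => hs.ev_left (ev_proj' hi) (hM _ (by lia)))
      (hC.tr_free b) hM

end Resolutions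

/-! ### Totally reflexive modules in depth zero -/

section Socle

open IsLocalRing

variable {R : Type u} [CommRing R] [IsLocalRing R] {C : Type u} [AddCommGroup C] [Module R C]
variable {M N : Type u} [AddCommGroup M] [AddCommGroup N] [Module R M] [Module R N]

/-- A nonzero finitely generated module over a local ring maps onto the residue field. -/
lemma exists_surj_residue [Module.Finite R M] [Nontrivial M] :
    ∃ f : M →ₗ[R] ResidueField R, Function.Surjective f := by
  obtain ⟨W, hW, -⟩ := (eq_top_or_exists_le_coatom (⊥ : Submodule R M)).resolve_left bot_ne_top
  have hs : IsSimpleModule R (M ⧸ W) := isSimpleModule_iff_isCoatom.2 hW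
  obtain ⟨I, hI, ⟨e⟩⟩ := isSimpleModule_iff_quot_maximal.1 hs
  obtain rfl := IsLocalRing.eq_maximalIdeal hI
  exact ⟨e.toLinearMap ∘ₗ W.mkQ, e.surjective.comp W.mkQ_surjective⟩

/-- In depth zero (`Hom(k, C) ≠ 0`) a module of finite `G_C`-dimension is totally reflexive. -/
lemma FR.tr_of_socle [IsNoetherianRing R] (hC : SD R C) [Nontrivial (ResidueField R →ₗ[R] C)]
    {n : ℕ} (h : FR R C n M) : TR R C M := by
  induction n generalizing M with
  | zero => exact h
  | succ n ih =>
    obtain ⟨b, g, hg, h⟩ := h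
    have hK := ih h
    have hs := SES.of_surj hg
    refine hs.tr_right hK (hC.tr_free b) fun i hi => ?_
    obtain _ | _ | i := i
    · lia
    · refine hs.ev_one (ev_proj 0) ?_
      by_contra hne
      push Not at hne
      obtain ⟨φ, hφ⟩ := hne
      -- a nonzero functional on the cokernel of `F* → K*` is evaluation at some `p ∈ K ⊆ F`
      let r := dualMapC R C (LinearMap.ker g).subtype
      have := hC.fin
      have := hK.fin
      have hnt : Nontrivial (_ ⧸ LinearMap.range r) := by
        rw [Submodule.Quotient.nontrivial_iff]
        intro htop
        have : φ ∈ LinearMap.range r := htop ▸ Submodule.mem_top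
        obtain ⟨ψ, hψ⟩ := this
        exact hφ ψ hψ
      obtain ⟨π, hπ⟩ := exists_surj_residue (R := R) (M := _ ⧸ LinearMap.range r)
      obtain ⟨t, ht⟩ := exists_ne (0 : ResidueField R →ₗ[R] C)
      obtain ⟨p, hp⟩ := hK.bij.2 (t ∘ₗ π ∘ₗ (LinearMap.range r).mkQ)
      have hz : evalC R C _ (p : Fin b → R) = 0 := by
        ext ψ
        have h1 := LinearMap.congr_fun hp (r ψ)
        have h2 : (LinearMap.range r).mkQ (r ψ) = 0 := by
          rw [Submodule.mkQ_apply, Submodule.Quotient.mk_eq_zero]; exact ⟨ψ, rfl⟩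
        rw [LinearMap.comp_apply, LinearMap.comp_apply, h2, map_zero, map_zero] at h1
        exact h1
      have hp0 : p = 0 := Subtype.ext ((hC.tr_free b).bij.1 (hz.trans (map_zero _).symm))
      apply ht
      ext y
      obtain ⟨z, rfl⟩ := hπ y
      obtain ⟨w, rfl⟩ := Submodule.mkQ_surjective _ z
      have h1 := LinearMap.congr_fun hp w
      rw [hp0, map_zero] at h1
      exact h1.symm
    · exact hs.ev_right (hK.ext _ (by lia)) (ev_proj _)

end Socle

/-! ### Reduction modulo a regular element -/

section SmulExt

variable {R : Type u} [CommRing R]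
variable {M N : Type u} [AddCommGroup M] [AddCommGroup N] [Module R M] [Module R N]

lemma comp_smul_ext {i : ℕ} (x : R) (α : E R M N i) :
    α.comp (Abelian.Ext.mk₀ (ModuleCat.ofHom (LinearMap.lsmul R N x))) (add_zero i) = x • α := by
  have : ModuleCat.ofHom (LinearMap.lsmul R N x) = x • 𝟙 (ModuleCat.of R N) := by ext; simp
  rw [this, Abelian.Ext.mk₀_smul, Abelian.Ext.comp_smul, Abelian.Ext.comp_mk₀_id]

lemma smul_ext_eq_zero {i : ℕ} {x : R} (hx : ∀ m : M, x • m = 0) (α : E R M N i) :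
    x • α = 0 := by
  have : x • 𝟙 (ModuleCat.of R M) = 0 := by ext m; simpa using hx m
  rw [← Abelian.Ext.mk₀_id_comp α, ← Abelian.Ext.smul_comp, ← Abelian.Ext.mk₀_smul, this,
    Abelian.Ext.mk₀_zero, Abelian.Ext.zero_comp]

lemma smul_ext_eq_zero' {i : ℕ} {x : R} (hx : ∀ n : N, x • n = 0) (α : E R M N i) :
    x • α = 0 := by
  have : LinearMap.lsmul R N x = 0 := by ext n; simpa using hx n
  rw [← comp_smul_ext, this, ModuleCat.ofHom_zero, Abelian.Ext.mk₀_zero, Abelian.Ext.comp_zero]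

/-- If `Ext^1(M, A) = 0`, maps `M → Q` lift to `B`. -/
lemma SES.lift {A B Q : Type u} [AddCommGroup A] [AddCommGroup B] [AddCommGroup Q] [Module R A]
    [Module R B] [Module R Q] {f : A →ₗ[R] B} {g : B →ₗ[R] Q} (h : SES R f g) (hA : EV R M A 1)
    (φ : M →ₗ[R] Q) : ∃ ψ : M →ₗ[R] B, g ∘ₗ ψ = φ := by
  obtain ⟨y, hy⟩ := Abelian.Ext.covariant_sequence_exact₃ (ModuleCat.of R M) h.shortExact
    (Abelian.Ext.mk₀ (ModuleCat.ofHom φ)) (zero_add 1) (hA.eq_zero _)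
  obtain ⟨ψ, rfl⟩ := Abelian.Ext.addEquiv₀.symm.surjective y
  rw [Abelian.Ext.addEquiv₀_symm_apply, Abelian.Ext.mk₀_comp_mk₀] at hy
  exact ⟨ψ.hom, congrArg ModuleCat.Hom.hom (Abelian.Ext.addEquiv₀.symm.injective hy)⟩

end SmulExt

section RingChange

variable {R : Type u} [CommRing R] {C : Type u} [AddCommGroup C] [Module R C]
variable (S : Type u) [CommRing S] [Algebra R S]
variable {D : Type u} [AddCommGroup D] [Module R D]

/-- `S = R/x` and `D = C/xC`, where `x` is a nonzerodivisor on both `R` and `C`. -/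
structure ModReg (x : R) (π : C →ₗ[R] D) : Prop where
  surj : Function.Surjective (algebraMap R S)
  ker : ∀ r, algebraMap R S r = 0 ↔ ∃ s, x * s = r
  regR : ∀ r, x * r = 0 → r = 0
  regC : ∀ c : C, x • c = 0 → c = 0
  π_surj : Function.Surjective π
  π_ker : ∀ c, π c = 0 ↔ ∃ c', x • c' = c

variable {S} {x : R} {π : C →ₗ[R] D}
variable {L : Type u} [AddCommGroup L] [Module R L] [Module S L] [IsScalarTower R S L]

namespace ModReg

lemma map_x (h : ModReg S x π) : algebraMap R S x = 0 := (h.ker x).2 ⟨1, mul_one x⟩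

include S in
lemma smul_eq_zero (h : ModReg S x π) (l : L) : x • l = 0 := by
  rw [← algebraMap_smul S, h.map_x, zero_smul]

lemma ses (h : ModReg S x π) : SES R (LinearMap.lsmul R C x) π where
  inj := (injective_iff_map_eq_zero _).2 h.regC
  surj := h.π_surj
  exact := h.π_ker

/-- `0 → R^b → R^b → S^b → 0`. -/
lemma ses_free (h : ModReg S x π) (b : ℕ) :
    SES R (LinearMap.lsmul R (Fin b → R) x) (LinearMap.compLeft (Algebra.linearMap R S) (Fin b)) where
  inj := (injective_iff_map_eq_zero _).2 fun v hv => funext fun i => h.regR _ (congrFun hv i)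
  surj v := by
    choose w hw using fun i => h.surj (v i)
    exact ⟨w, funext hw⟩
  exact v := by
    constructor
    · intro hv
      choose w hw using fun i => (h.ker (v i)).1 (congrFun hv i)
      exact ⟨w, funext hw⟩
    · rintro ⟨w, rfl⟩
      funext i
      exact (h.ker _).2 ⟨w i, rfl⟩

lemma ev_free (h : ModReg S x π) (b : ℕ) {i : ℕ} (hi : 2 ≤ i) : EV R (Fin b → S) C i := by
  obtain ⟨i, rfl⟩ := Nat.exists_eq_add_of_le' hi
  exact (h.ses_free b).ev_right (ev_proj i) (ev_proj _)

lemma hom_eq_zero (h : ModReg S x π) : EV R L C 0 := by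
  refine ev_zero_iff.2 ⟨fun f g => ?_⟩
  rw [← sub_eq_zero]
  ext l
  apply h.regC
  rw [← map_smul, h.smul_eq_zero, map_zero]

/-- The connecting map `Hom(L, D) → Ext^1(L, C)` of `0 → C → C → D → 0`. -/
noncomputable def conn (h : ModReg S x π) (φ : L →ₗ[R] D) : E R L C 1 :=
  (Abelian.Ext.mk₀ (ModuleCat.ofHom φ)).comp h.ses.shortExact.extClass (zero_add 1)

lemma conn_surj (h : ModReg S x π) (α : E R L C 1) : ∃ φ, h.conn φ = α := by
  have h0 : α.comp (Abelian.Ext.mk₀ (ModuleCat.ofHom (LinearMap.lsmul R C x))) (add_zero 1) = 0 := by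
    rw [comp_smul_ext]; exact smul_ext_eq_zero h.smul_eq_zero α
  obtain ⟨β, hβ⟩ := Abelian.Ext.covariant_sequence_exact₁ _ h.ses.shortExact α h0 (zero_add 1)
  obtain ⟨φ, rfl⟩ := Abelian.Ext.addEquiv₀.symm.surjective β
  exact ⟨φ.hom, hβ⟩

lemma conn_inj (h : ModReg S x π) (φ ψ : L →ₗ[R] D) (hφ : h.conn φ = h.conn ψ) : φ = ψ := by
  have h0 : (Abelian.Ext.mk₀ (ModuleCat.ofHom φ) - Abelian.Ext.mk₀ (ModuleCat.ofHom ψ)).comp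
      h.ses.shortExact.extClass (zero_add 1) = 0 := by
    rw [sub_eq_add_neg, Abelian.Ext.add_comp, Abelian.Ext.neg_comp, ← sub_eq_add_neg, sub_eq_zero]
    exact hφ
  obtain ⟨β, hβ⟩ := Abelian.Ext.covariant_sequence_exact₃ _ h.ses.shortExact _ (zero_add 1) h0
  rw [EV.eq_zero h.hom_eq_zero β, Abelian.Ext.zero_comp, eq_comm, sub_eq_zero] at hβ
  exact congrArg ModuleCat.Hom.hom (Abelian.Ext.addEquiv₀.symm.injective hβ)

omit [Module S L] [IsScalarTower R S L] in
lemma comp_conn (h : ModReg S x π) {L' : Type u} [AddCommGroup L'] [Module R L'] (f : L' →ₗ[R] L) (φ : L →ₗ[R] D) :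
    (Abelian.Ext.mk₀ (ModuleCat.ofHom f)).comp (h.conn φ) (zero_add 1) = h.conn (φ ∘ₗ f) := by
  rw [conn, conn, Abelian.Ext.mk₀_comp_mk₀_assoc, ← ModuleCat.ofHom_comp]

/-- Rees: `Ext^i_S(L, D) = 0` if and only if `Ext^{i+1}_R(L, C) = 0`. -/
theorem ev_iff [IsNoetherianRing S] [Module S D] [IsScalarTower R S D] (h : ModReg S x π)
    [Module.Finite S L] (i : ℕ) : EV S L D i ↔ EV R L C (i + 1) := by
  induction i generalizing L with
  | zero =>
    constructor
    · intro h0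
      rw [ev_zero_iff] at h0
      refine ev_of_forall fun α => ?_
      obtain ⟨φ, rfl⟩ := h.conn_surj α
      have : φ.extendScalarsOfSurjective h.surj = 0 := Subsingleton.elim _ _
      have : φ = 0 := by ext l; exact LinearMap.congr_fun this l
      rw [this, conn, ModuleCat.ofHom_zero, Abelian.Ext.mk₀_zero, Abelian.Ext.zero_comp]
    · intro h1
      rw [ev_zero_iff]
      refine ⟨fun φ ψ => LinearMap.restrictScalars_injective R (h.conn_inj _ _ ?_)⟩
      rw [h1.eq_zero (h.conn _), h1.eq_zero (h.conn _)]
  | succ i ih =>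
    obtain ⟨b, g, hg⟩ := exists_cover (R := S) L
    have hs := SES.of_surj hg
    have hsR : SES R ((LinearMap.ker g).subtype.restrictScalars R) (g.restrictScalars R) :=
      ⟨hs.inj, hs.surj, hs.exact⟩
    cases i with
    | zero =>
      constructor
      · intro h1
        refine ev_of_forall fun α => ?_
        obtain ⟨β, rfl⟩ := Abelian.Ext.contravariant_sequence_exact₃ hsR.shortExact _ α
          ((h.ev_free b le_rfl).eq_zero _) (add_comm 1 1)
        obtain ⟨φ, rfl⟩ := h.conn_surj β
        obtain ⟨ψ, hψ⟩ := hs.extend h1 (φ.extendScalarsOfSurjective h.surj)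
        have : ψ.restrictScalars R ∘ₗ (LinearMap.ker g).subtype.restrictScalars R = φ := by
          ext l; exact LinearMap.congr_fun hψ l
        rw [← this, ← h.comp_conn]
        exact hsR.shortExact.extClass_comp_assoc (h.conn (ψ.restrictScalars R))
      · intro h2
        refine hs.ev_one (ev_proj 0) fun φ => ?_
        obtain ⟨α, hα⟩ := Abelian.Ext.contravariant_sequence_exact₁ hsR.shortExact _
          (h.conn (φ.restrictScalars R)) (add_comm 1 1) (h2.eq_zero _)
        obtain ⟨ψ, rfl⟩ := h.conn_surj α
        rw [h.comp_conn] at hα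
        have := h.conn_inj _ _ hα
        refine ⟨ψ.extendScalarsOfSurjective h.surj, ?_⟩
        ext l
        exact LinearMap.congr_fun this l
    | succ i =>
      have e1 : EV S L D (i + 1 + 1) ↔ EV S (LinearMap.ker g) D (i + 1) :=
        ⟨fun hh => hs.ev_left (ev_proj _) hh, fun hh => hs.ev_right hh (ev_proj _)⟩
      have e2 : EV R L C (i + 1 + 1 + 1) ↔ EV R (LinearMap.ker g) C (i + 1 + 1) :=
        ⟨fun hh => hsR.ev_left (h.ev_free b (by omega)) hh,
          fun hh => hsR.ev_right hh (h.ev_free b (by omega))⟩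
      rw [e1, e2, ih]

omit [Module S L] [IsScalarTower R S L] in
include S in
/-- If `C` is semidualizing over `R` then `C/xC` is semidualizing over `R/x`. -/
theorem sd [Module S D] [IsScalarTower R S D] [IsNoetherianRing S] (h : ModReg S x π)
    (hC : SD R C) : SD S D := by
  have := hC.fin
  have : Module.Finite R D := Module.Finite.of_surjective π h.π_surj
  have : Module.Finite S D := Module.Finite.of_restrictScalars_finite R S D
  refine ⟨this, ⟨?_, fun ψ => ?_⟩, fun i hi => ?_⟩
  · have key (s : S) (hs : s • (LinearMap.id : D →ₗ[S] D) = 0) : s = 0 := by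
      obtain ⟨r, rfl⟩ := h.surj s
      have hr (c : C) : ∃ c', x • c' = r • c := by
        rw [← h.π_ker, map_smul, ← algebraMap_smul S]
        exact LinearMap.congr_fun hs (π c)
      choose θ hθ using hr
      have hinj := h.ses.inj
      let θ' : C →ₗ[R] C :=
        { toFun := θ
          map_add' := fun a b => hinj (by simp [hθ])
          map_smul' := fun t a => hinj (by
            simp only [LinearMap.lsmul_apply, hθ, RingHom.id_apply]
            rw [smul_comm x t, hθ, smul_comm]) }
      obtain ⟨r', hr'⟩ := hC.bij.2 θ'
      refine (h.ker r).2 ⟨r', hC.bij.1 ?_⟩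
      ext c
      have h1 : r' • c = θ c := LinearMap.congr_fun hr' c
      simp only [LinearMap.smul_apply, LinearMap.id_apply, mul_smul, h1, hθ]
    intro s t hst
    refine sub_eq_zero.1 (key _ ?_)
    have : s • (LinearMap.id : D →ₗ[S] D) = t • LinearMap.id := hst
    rw [sub_smul, this, sub_self]
  · obtain ⟨θ, hθ⟩ := h.ses.lift (hC.ext 1 one_pos) (ψ.restrictScalars R ∘ₗ π)
    obtain ⟨r, rfl⟩ := hC.bij.2 θ
    refine ⟨algebraMap R S r, ?_⟩
    ext d
    obtain ⟨c, rfl⟩ := h.π_surj d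
    have h1 : π (r • c) = ψ (π c) := LinearMap.congr_fun hθ c
    rw [← h1]
    simp
  · obtain ⟨j, rfl⟩ := Nat.exists_eq_add_of_le' hi
    exact (h.ev_iff _).2 (h.ses.ev_right (hC.ext _ j.succ_pos) (hC.ext _ (Nat.succ_pos _)))

end ModReg

end RingChange

/-! ### Descent of finite `G_C`-dimension modulo a regular element -/

section RingChange2

variable {R : Type u} [CommRing R] [IsNoetherianRing R] {C : Type u} [AddCommGroup C] [Module R C]
variable {S : Type u} [CommRing S] [Algebra R S]
variable {D : Type u} [AddCommGroup D] [Module R D] [Module S D] [IsScalarTower R S D]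
variable {x : R} {π : C →ₗ[R] D}
variable {P F K : Type u} [AddCommGroup P] [AddCommGroup F] [AddCommGroup K]
  [Module R P] [Module R F] [Module R K] [Module S K] [IsScalarTower R S K]

namespace ModReg

omit [IsNoetherianRing R] [Module S D] [IsScalarTower R S D] in
include S in
/-- `0 → P → F → K → 0` with `xK = 0`: multiplication by `x` on `F` factors through `P`. -/
lemma exists_tau (h : ModReg S x π) {f : P →ₗ[R] F} {g : F →ₗ[R] K} (hs : SES R f g) :
    ∃ τ : F →ₗ[R] P, (∀ v, f (τ v) = x • v) ∧ ∀ p, τ (f p) = x • p := by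
  have h1 (v : F) : ∃ p, f p = x • v := (hs.exact _).1 (by rw [map_smul, h.smul_eq_zero])
  choose τ hτ using h1
  refine ⟨⟨⟨τ, fun a b => hs.inj (by simp [hτ])⟩, fun t a => hs.inj ?_⟩, hτ, fun p => hs.inj ?_⟩
  · simp [hτ, smul_comm x t]
  · simp [hτ]

omit [IsNoetherianRing R] [Module S D] [IsScalarTower R S D] in
/-- A map into `C` with values in `xC` is divisible by `x`. -/
lemma exists_div (h : ModReg S x π) {φ : P →ₗ[R] C} (hφ : ∀ p, π (φ p) = 0) :
    ∃ ψ : P →ₗ[R] C, ∀ p, x • ψ p = φ p := by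
  have h1 (p : P) : ∃ c, x • c = φ p := (h.π_ker _).1 (hφ p)
  choose ψ hψ using h1
  have hinj : ∀ {a b : C}, x • a = x • b → a = b := fun hab => h.ses.inj hab
  refine ⟨⟨⟨ψ, fun a b => hinj (by simp [hψ])⟩, fun t a => hinj ?_⟩, hψ⟩
  simp [hψ, smul_comm x t]

omit [IsNoetherianRing R] in
/-- The exact sequence `0 → Hom(F, C) → Hom(P, C) → Hom(K, D) → 0` for
`0 → P → F → K → 0` with `F` free and `xK = 0`. -/
lemma exists_delta (h : ModReg S x π) {b : ℕ} {f : P →ₗ[R] (Fin b → R)}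
    {g : (Fin b → R) →ₗ[R] K} (hs : SES R f g) {τ : (Fin b → R) →ₗ[R] P}
    (hτ : ∀ v, f (τ v) = x • v) (hτ' : ∀ p, τ (f p) = x • p) :
    ∃ δ : (P →ₗ[R] C) →ₗ[R] (K →ₗ[S] D), (∀ φ v, δ φ (g v) = π (φ (τ v))) ∧
      SES R (dualMapC R C f) δ := by
  have hfac (φ : P →ₗ[R] C) : ∃ χ : K →ₗ[S] D, ∀ v, χ (g v) = π (φ (τ v)) := by
    have hker : LinearMap.ker g ≤ LinearMap.ker (π ∘ₗ φ ∘ₗ τ) := by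
      intro v hv
      obtain ⟨p, rfl⟩ := (hs.exact v).1 hv
      simp only [LinearMap.mem_ker, LinearMap.comp_apply, hτ']
      exact (h.π_ker _).2 ⟨φ p, (map_smul φ x p).symm⟩
    let e := g.quotKerEquivOfSurjective hs.surj
    refine ⟨((((LinearMap.ker g).liftQ _ hker) ∘ₗ e.symm.toLinearMap).extendScalarsOfSurjective
      h.surj), fun v => ?_⟩
    have : e.symm (g v) = (LinearMap.ker g).mkQ v := by
      rw [LinearEquiv.symm_apply_eq]; rfl
    simp [this]
  choose δ hδ using hfac
  have hext {χ χ' : K →ₗ[S] D} (hχ : ∀ v, χ (g v) = χ' (g v)) : χ = χ' := by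
    ext k
    obtain ⟨v, rfl⟩ := hs.surj k
    exact hχ v
  refine ⟨⟨⟨δ, fun φ ψ => hext fun v => by simp [hδ]⟩, fun t φ => hext fun v => by simp [hδ]⟩,
    hδ, ?_, ?_, ?_⟩
  · refine (injective_iff_map_eq_zero _).2 fun ψ hψ => ?_
    refine LinearMap.ext fun v => h.regC _ ?_
    rw [← map_smul, ← hτ]
    exact LinearMap.congr_fun hψ _
  · intro χ
    obtain ⟨ψ, hψ⟩ := h.ses.lift (ev_proj 0) (χ.restrictScalars R ∘ₗ g)
    have hψ' (v) : π (ψ v) = χ (g v) := LinearMap.congr_fun hψ v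
    obtain ⟨φ, hφ⟩ := h.exists_div (φ := ψ ∘ₗ f) fun p => by
      rw [LinearMap.comp_apply, hψ', (hs.exact _).2 ⟨p, rfl⟩, map_zero]
    refine ⟨φ, hext fun v => ?_⟩
    refine (hδ φ v).trans ?_
    rw [← hψ']
    congr 1
    apply h.ses.inj
    simp only [LinearMap.lsmul_apply, hφ, LinearMap.comp_apply, hτ, map_smul]
  · intro φ
    constructor
    · intro hφ
      obtain ⟨ψ, hψ⟩ := h.exists_div (φ := φ ∘ₗ τ) fun v => by
        refine (hδ φ v).symm.trans ?_
        exact LinearMap.congr_fun hφ (g v)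
      refine ⟨ψ, ?_⟩
      refine LinearMap.ext fun p => h.ses.inj ?_
      have := hψ (f p)
      simpa [hτ'] using this
    · rintro ⟨ψ, rfl⟩
      refine hext fun v => (hδ _ v).trans ?_
      simp only [LinearMap.lcomp_apply, hτ, map_smul, LinearMap.zero_apply]
      exact h.smul_eq_zero _

/-- An `S`-module which is a quotient of a free `R`-module by a totally `C`-reflexive module and
has `Ext^i_R(K, C) = 0` for `i ≥ 2` is totally `D`-reflexive over `S`. -/
theorem tr_quot [IsNoetherianRing S] (hC : SD R C) (h : ModReg S x π) {b : ℕ}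
    {f : P →ₗ[R] (Fin b → R)} {g : (Fin b → R) →ₗ[R] K} (hs : SES R f g) (hP : TR R C P)
    (hK : ∀ i, EV R K C (i + 2)) : TR S D K := by
  obtain ⟨τ, hτ, hτ'⟩ := h.exists_tau hs
  obtain ⟨δ, hδ, hd⟩ := h.exists_delta hs hτ hτ'
  have := hP.fin
  have := hC.fin
  have : Module.Finite R K := Module.Finite.of_surjective g hs.surj
  have hKf : Module.Finite S K := Module.Finite.of_restrictScalars_finite R S K
  have : Module.Finite R (K →ₗ[S] D) := Module.Finite.of_surjective δ hd.surj
  have : Module.Finite S (K →ₗ[S] D) := Module.Finite.of_restrictScalars_finite R S _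
  have hD := h.sd hC
  refine ⟨hKf, ⟨?_, ?_⟩, fun i hi => ?_, fun i hi => ?_⟩
  · refine (injective_iff_map_eq_zero _).2 fun k hk => ?_
    obtain ⟨v, rfl⟩ := hs.surj k
    have hv (φ : P →ₗ[R] C) : π (φ (τ v)) = 0 := by
      rw [← hδ]; exact LinearMap.congr_fun hk (δ φ)
    obtain ⟨ψ, hψ⟩ := h.exists_div (φ := evalC R C P (τ v)) hv
    obtain ⟨p, rfl⟩ := hP.bij.2 ψ
    have : τ v = x • p := hP.bij.1 (by
      ext φ
      rw [← hψ φ]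
      simp)
    have h2 : x • v = x • f p := by rw [← hτ, this, map_smul]
    have h3 : v = f p := by
      funext i
      have := congrFun h2 i
      simp only [Pi.smul_apply, smul_eq_mul] at this
      exact sub_eq_zero.1 (h.regR _ (by rw [mul_sub, this, sub_self]))
    exact (hs.exact _).2 ⟨p, h3.symm⟩
  · intro Ψ
    obtain ⟨θ, hθ⟩ := h.ses.lift (hP.ext_dual 1 one_pos) (Ψ.restrictScalars R ∘ₗ δ)
    obtain ⟨p, rfl⟩ := hP.bij.2 θ
    have hθ' (φ : P →ₗ[R] C) : π (φ p) = Ψ (δ φ) := LinearMap.congr_fun hθ φ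
    have h1 (i : Fin b) : ∃ s, x * s = f p i := by
      rw [← h.ker]
      refine hD.bij.1 ?_
      ext d
      obtain ⟨c, rfl⟩ := h.π_surj d
      have h2 := hθ' (dualMapC R C f ((LinearMap.toSpanSingleton R C c) ∘ₗ LinearMap.proj i))
      rw [(hd.exact _).2 ⟨_, rfl⟩, map_zero] at h2
      simpa using h2
    choose v hv using h1
    have hp : p = τ v := hs.inj (by rw [hτ]; funext i; exact (hv i).symm)
    refine ⟨g v, ?_⟩
    ext χ
    obtain ⟨φ, rfl⟩ := hd.surj χ
    rw [← hθ', hp, ← hδ]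
    rfl
  · obtain ⟨j, rfl⟩ := Nat.exists_eq_add_of_le' hi
    exact (h.ev_iff _).2 (hK j)
  · exact (h.ev_iff _).2 (hd.ev_right ((hC.tr_free b).ext_dual i hi) (hP.ext_dual _ i.succ_pos))

/-- The length of the resolution over `S = R/x` is governed by the vanishing of `Ext^i_R(K, C)`;
induct on it through syzygies over `S`. -/
theorem fr_aux [IsNoetherianRing S] (hC : SD R C) (h : ModReg S x π) (j : ℕ)
    [Module.Finite S K] (hK : ∃ n, FR R C n K) (hext : ∀ i, j + 1 < i → EV R K C i) :
    FR S D j K := by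
  induction j generalizing K with
  | zero =>
    obtain ⟨n, hK⟩ := hK
    have := hK.fin
    obtain ⟨b, g, hg⟩ := exists_cover (R := R) K
    have hs := SES.of_surj hg
    have hP : TR R C (LinearMap.ker g) :=
      (((hK.succ hC).ker_cover hC hg)).tr_of_ev hC fun i hi =>
        hs.ev_left (ev_proj' hi) (hext _ (by omega))
    exact h.tr_quot hC hs hP fun i => hext _ (by omega)
  | succ j ih =>
    obtain ⟨b, g, hg⟩ := exists_cover (R := S) K
    have hs := SES.of_surj hg
    have hsR : SES R ((LinearMap.ker g).subtype.restrictScalars R) (g.restrictScalars R) :=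
      ⟨hs.inj, hs.surj, hs.exact⟩
    refine ⟨b, g, hg, ih ?_ fun i hi => hsR.ev_left (h.ev_free b (by omega)) (hext _ (by omega))⟩
    obtain ⟨n, hK⟩ := hK
    obtain ⟨u, w, huw⟩ := exists_ses_ker_comp (g.restrictScalars R) (h.ses_free b).surj
    exact ⟨n + 1, huw.fr_right hC
      (FR.congr (h.ses_free b).kerEquiv ((hC.tr_free b).fr hC n))
      ((hK.succ hC).ker_cover hC (hg.comp (h.ses_free b).surj))⟩

/-- Finiteness of `G_C`-dimension descends modulo a regular element annihilating the module. -/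
theorem fr_descend [IsNoetherianRing S] (hC : SD R C) (h : ModReg S x π) {n : ℕ}
    (hK : FR R C n K) : FR S D n K := by
  have := hK.fin
  have : Module.Finite S K := Module.Finite.of_restrictScalars_finite R S K
  exact h.fr_aux hC n ⟨n, hK⟩ fun i hi => hK.ev (by omega)

end ModReg

end RingChange2

/-! ### Depth and type -/

open IsLocalRing

section BassSec

variable {R : Type u} [CommRing R] [IsLocalRing R]
variable {M Q N : Type u} [AddCommGroup M] [Module R M] [AddCommGroup Q] [Module R Q]
  [AddCommGroup N] [Module R N]

variable (R M) in
/-- `M` has depth `d` and type `t`. -/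
def Bass (d : ℕ) (t : ℕ∞) : Prop :=
  (∀ i < d, EV R (ResidueField R) M i) ∧ Module.length R (E R (ResidueField R) M d) = t ∧ t ≠ 0

lemma residue_smul {x : R} (hx : x ∈ maximalIdeal R) (c : ResidueField R) : x • c = 0 := by
  rw [Algebra.smul_def, show algebraMap R (ResidueField R) x = 0 from
    (residue_eq_zero_iff x).2 hx, zero_mul]

lemma Bass.not_ev {d : ℕ} {t : ℕ∞} (h : Bass R M d t) : ¬ EV R (ResidueField R) M d :=
  fun h' => h.2.2 (h.2.1 ▸ Module.length_eq_zero_iff.2 h')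

lemma Bass.unique {d d' : ℕ} {t t' : ℕ∞} (h : Bass R M d t) (h' : Bass R M d' t') :
    d = d' ∧ t = t' := by
  have : d = d' := by
    rcases lt_trichotomy d d' with hlt | rfl | hlt
    · exact absurd (h'.1 d hlt) h.not_ev
    · rfl
    · exact absurd (h.1 d' hlt) h'.not_ev
  subst this
  exact ⟨rfl, h.2.1.symm.trans h'.2.1⟩

omit [IsLocalRing R] in
lemma not_ev_iff {i : ℕ} : Nontrivial (extM R M N i) ↔ ¬ EV R M N i := by
  rw [ev_iff_extM, not_subsingleton_iff_nontrivial]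

lemma Bass.depthNat_eq {d : ℕ} {t : ℕ∞} (h : Bass R M d t) : depthNat R M = d := by
  refine IsLeast.csInf_eq ⟨not_ev_iff.2 h.not_ev, fun i hi => ?_⟩
  by_contra hlt
  exact not_ev_iff.1 hi (h.1 i (not_le.1 hlt))

lemma Bass.depth_eq {d : ℕ} {t : ℕ∞} (h : Bass R M d t) : depth R M = d := by
  refine IsLeast.csInf_eq ⟨⟨d, rfl, not_ev_iff.2 h.not_ev⟩, ?_⟩
  rintro n ⟨i, rfl, hi⟩
  by_contra hlt
  exact not_ev_iff.1 hi (h.1 i (by exact_mod_cast not_le.1 hlt))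

lemma Bass.rtype_eq {d : ℕ} {t : ℕ∞} (h : Bass R M d t) : rtype R M = t := by
  rw [rtype, mLength, h.depthNat_eq, ← Module.length_eq_height,
    (extM_equiv R (ResidueField R) M d).some.length_eq]
  exact h.2.1

lemma bass_zero_iff {t : ℕ∞} :
    Bass R M 0 t ↔ Module.length R (ResidueField R →ₗ[R] M) = t ∧ t ≠ 0 := by
  rw [Bass, (e0 R (ResidueField R) M).length_eq]
  simp

/-- If `x` is `M`-regular, `xL = 0` and `Ext^d(L, M) = 0`, then
`Ext^d(L, M/xM) ≅ Ext^{d+1}(L, M)`. -/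
lemma SES.ext_shift {R : Type u} [CommRing R] {L M Q : Type u} [AddCommGroup M] [Module R M]
    [AddCommGroup Q] [Module R Q]
    [AddCommGroup L] [Module R L] {x : R} {π : M →ₗ[R] Q} (h : SES R (LinearMap.lsmul R M x) π)
    (hx : ∀ l : L, x • l = 0) {d : ℕ} (hM : EV R L M d) :
    Nonempty (E R L Q d ≃ₗ[R] E R L M (d + 1)) := by
  refine ⟨LinearEquiv.ofBijective
    (h.shortExact.extClass.postcompOfLinear R (ModuleCat.of R L) rfl) ⟨?_, fun α => ?_⟩⟩
  · refine (injective_iff_map_eq_zero _).2 fun α hα => ?_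
    obtain ⟨β, rfl⟩ := Abelian.Ext.covariant_sequence_exact₃ _ h.shortExact α rfl hα
    rw [hM.eq_zero β, Abelian.Ext.zero_comp]
  · have h0 : α.comp (Abelian.Ext.mk₀ (ModuleCat.ofHom (LinearMap.lsmul R M x)))
        (add_zero _) = 0 := by
      rw [comp_smul_ext]; exact smul_ext_eq_zero hx α
    obtain ⟨β, hβ⟩ := Abelian.Ext.covariant_sequence_exact₁ _ h.shortExact α h0 rfl
    exact ⟨β, hβ⟩

lemma SES.ev_smul {R : Type u} [CommRing R] {L M Q : Type u} [AddCommGroup M] [Module R M]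
    [AddCommGroup Q] [Module R Q]
    [AddCommGroup L] [Module R L] {x : R} {π : M →ₗ[R] Q} (h : SES R (LinearMap.lsmul R M x) π)
    (hx : ∀ l : L, x • l = 0) : EV R L M 0 := by
  refine ev_zero_iff.2 ⟨fun f g => ?_⟩
  ext l
  have h2 (f : L →ₗ[R] M) : f l = 0 := h.inj (by
    rw [LinearMap.lsmul_apply, ← map_smul, hx, map_zero, map_zero])
  rw [h2, h2]

/-- Depth drops by one modulo a regular element, and the type is unchanged. -/
lemma SES.bass_iff {x : R} {π : M →ₗ[R] Q} (h : SES R (LinearMap.lsmul R M x) π)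
    (hx : x ∈ maximalIdeal R) {d : ℕ} {t : ℕ∞} : Bass R Q d t ↔ Bass R M (d + 1) t := by
  have hk := fun c : ResidueField R => residue_smul hx c
  have key : (∀ i < d, EV R (ResidueField R) Q i) ↔ ∀ i < d + 1, EV R (ResidueField R) M i := by
    constructor
    · intro hQ i hi
      induction i with
      | zero => exact h.ev_smul hk
      | succ i ih =>
        have := ((h.ext_shift hk (ih (by omega))).some.symm.toEquiv.subsingleton_congr)
        exact this.2 (hQ i (by omega))
    · intro hM i hi
      exact h.ev_right' (hM _ (by omega)) (hM _ (by omega))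
  unfold Bass
  rw [key]
  refine and_congr_right fun hM => ?_
  rw [(h.ext_shift hk (hM d (by omega))).some.length_eq]

open scoped Pointwise in
lemma ses_quot {R : Type u} [CommRing R] {M : Type u} [AddCommGroup M] [Module R M] {x : R}
    (hx : IsSMulRegular M x) :
    SES R (LinearMap.lsmul R M x) (x • (⊤ : Submodule R M)).mkQ where
  inj := hx
  surj := Submodule.mkQ_surjective _
  exact m := by
    rw [Submodule.mkQ_apply, Submodule.Quotient.mk_eq_zero, Submodule.mem_smul_pointwise_iff_exists]
    simp

omit [IsLocalRing R] in
/-- If `Hom(N, M) = 0`, there is an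
`M`-regular element killing `N`. -/
lemma exists_regular_ann [IsNoetherianRing R] [Module.Finite R M] [Module.Finite R N]
    (hM : EV R N M 0) : ∃ x ∈ Module.annihilator R N, IsSMulRegular M x :=
  IsSMulRegular.subsingleton_linearMap_iff.1 (ev_zero_iff.1 hM)

lemma exists_regular [IsNoetherianRing R] [Module.Finite R M]
    (hM : EV R (ResidueField R) M 0) : ∃ x ∈ maximalIdeal R, IsSMulRegular M x := by
  obtain ⟨x, hx, h⟩ := exists_regular_ann hM
  refine ⟨x, ?_, h⟩
  rw [Module.mem_annihilator] at hx
  have := hx 1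
  rwa [Algebra.smul_def, mul_one, show algebraMap R (ResidueField R) x = residue R x from rfl,
    residue_eq_zero_iff] at this

lemma withBot_le_of_add_one {a b : WithBot ℕ∞} {n : ℕ} (h : a + 1 = b)
    (hb : b ≤ ((n + 1 : ℕ) : WithBot ℕ∞)) : a ≤ (n : WithBot ℕ∞) := by
  subst h
  induction a with
  | bot => exact bot_le
  | coe a =>
    have h2 : a + 1 ≤ ((n + 1 : ℕ) : ℕ∞) := by exact_mod_cast hb
    rw [Nat.cast_add, Nat.cast_one] at h2
    exact_mod_cast (ENat.add_le_add_iff_right (by simp)).1 h2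

lemma exists_supportDim_le [IsNoetherianRing R] :
    ∃ n : ℕ, Module.supportDim R M ≤ n := by
  have h1 := Module.supportDim_le_ringKrullDim R M
  have h2 : ringKrullDim R < ⊤ := ringKrullDim_lt_top
  have h3 : Module.supportDim R M < ⊤ := h1.trans_lt h2
  generalize Module.supportDim R M = a at h3
  induction a with
  | bot => exact ⟨0, bot_le⟩
  | coe a =>
    induction a with
    | top => exact absurd h3 (lt_irrefl _)
    | coe n => exact ⟨n, le_rfl⟩

/-- Every nonzero finitely generated module has finite depth. -/
lemma exists_bass [IsNoetherianRing R] [Module.Finite R M] [Nontrivial M] :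
    ∃ d t, Bass R M d t := by
  obtain ⟨n, hn⟩ := exists_supportDim_le (R := R) (M := M)
  have base {M : Type u} [AddCommGroup M] [Module R M] (h : ¬ EV R (ResidueField R) M 0) :
      ∃ d t, Bass R M d t :=
    ⟨0, _, bass_zero_iff.2 ⟨rfl, fun h0 => h (ev_zero_iff.2 (Module.length_eq_zero_iff.1 h0))⟩⟩
  induction n generalizing M with
  | zero =>
    by_cases h : EV R (ResidueField R) M 0
    · obtain ⟨x, hx, hr⟩ := exists_regular h
      have := nontrivial_quotSMulTop_of_mem_maximalIdeal M hx
      have h2 := Module.supportDim_quotSMulTop_succ_eq_supportDim hr hx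
      have h3 := Module.supportDim_ne_bot_of_nontrivial R (QuotSMulTop x M)
      rw [← h2] at hn
      exfalso
      generalize Module.supportDim R (QuotSMulTop x M) = a at hn h3
      induction a with
      | bot => exact h3 rfl
      | coe a =>
        have : a + 1 ≤ 0 := by exact_mod_cast hn
        simp at this
    · exact base h
  | succ n ih =>
    by_cases h : EV R (ResidueField R) M 0
    · obtain ⟨x, hx, hr⟩ := exists_regular h
      have := nontrivial_quotSMulTop_of_mem_maximalIdeal M hx
      obtain ⟨d, t, hd⟩ := ih (M := QuotSMulTop x M) (withBot_le_of_add_one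
        (Module.supportDim_quotSMulTop_succ_eq_supportDim hr hx) hn)
      exact ⟨d + 1, t, ((ses_quot hr).bass_iff hx).1 hd⟩
    · exact base h

end BassSec

section BassRing

variable {R : Type u} [CommRing R] [IsLocalRing R] {S : Type u} [CommRing S] [IsLocalRing S]
  [Algebra R S]
variable {L : Type u} [AddCommGroup L] [Module R L] [Module S L] [IsScalarTower R S L]

lemma mem_maximalIdeal_iff (h : Function.Surjective (algebraMap R S)) (x : R) :
    algebraMap R S x ∈ maximalIdeal S ↔ x ∈ maximalIdeal R := by
  have := h.isLocalHom
  simp [mem_maximalIdeal]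

omit [IsLocalRing S] [Algebra R S] [Module S L] [IsScalarTower R S L] in
/-- `Hom(k, L)` is the socle of `L`. -/
lemma hom_residue_equiv :
    Nonempty ((ResidueField R →ₗ[R] L) ≃ₗ[R] Submodule.torsionBySet R L (maximalIdeal R)) := by
  let φ : (ResidueField R →ₗ[R] L) →ₗ[R] Submodule.torsionBySet R L (maximalIdeal R) :=
    LinearMap.codRestrict _ (LinearMap.applyₗ 1) fun f => by
      rw [Submodule.mem_torsionBySet_iff]
      rintro ⟨a, ha⟩
      simp only [LinearMap.applyₗ_apply_apply]
      rw [← map_smul, residue_smul ha, map_zero]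
  refine ⟨LinearEquiv.ofBijective φ ⟨?_, ?_⟩⟩
  · intro f g hfg
    have h1 : f 1 = g 1 := congrArg Subtype.val hfg
    ext c
    obtain ⟨r, rfl⟩ := residue_surjective c
    have h2 : residue R r = r • (1 : ResidueField R) := by
      rw [Algebra.smul_def, mul_one]; rfl
    rw [h2, map_smul, map_smul, h1]
  · rintro ⟨l, hl⟩
    rw [Submodule.mem_torsionBySet_iff] at hl
    refine ⟨Submodule.liftQ (maximalIdeal R) (LinearMap.toSpanSingleton R L l)
      fun a ha => hl ⟨a, ha⟩, ?_⟩
    apply Subtype.ext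
    exact (LinearMap.toSpanSingleton_apply R L l 1).trans (one_smul R l)

lemma length_hom_residue (h : Function.Surjective (algebraMap R S)) :
    Module.length R (ResidueField R →ₗ[R] L) = Module.length S (ResidueField S →ₗ[S] L) := by
  rw [hom_residue_equiv.some.length_eq, (hom_residue_equiv (R := S) (L := L)).some.length_eq,
    ← Module.length_eq_of_surjective h]
  have heq : Submodule.torsionBySet R L (maximalIdeal R) =
      (Submodule.torsionBySet S L (maximalIdeal S)).restrictScalars R := by
    ext l
    rw [Submodule.restrictScalars_mem, Submodule.mem_torsionBySet_iff,
      Submodule.mem_torsionBySet_iff]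
    constructor
    · rintro hl ⟨s, hs⟩
      obtain ⟨r, rfl⟩ := h s
      have := hl ⟨r, (mem_maximalIdeal_iff h r).1 hs⟩
      simpa using this
    · rintro hl ⟨r, hr⟩
      have := hl ⟨algebraMap R S r, (mem_maximalIdeal_iff h r).2 hr⟩
      simpa using this
  rw [heq]
  rfl

omit [IsLocalRing R] [IsLocalRing S] [Module R L] [Module S L] [IsScalarTower R S L] [AddCommGroup L] in
lemma SES.restrict {A B Q : Type u} [AddCommGroup A] [AddCommGroup B] [AddCommGroup Q] [Module R A]
    [Module R B] [Module R Q] [Module S A] [Module S B] [Module S Q] [IsScalarTower R S A]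
    [IsScalarTower R S B] [IsScalarTower R S Q] {f : A →ₗ[S] B} {g : B →ₗ[S] Q}
    (h : SES S f g) : SES R (f.restrictScalars R) (g.restrictScalars R) :=
  ⟨h.inj, h.surj, h.exact⟩

lemma Bass.restrict [IsNoetherianRing S] (h : Function.Surjective (algebraMap R S))
    [Module.Finite S L] {d : ℕ} {t : ℕ∞} (hL : Bass S L d t) : Bass R L d t := by
  induction d generalizing L with
  | zero =>
    rw [bass_zero_iff] at hL ⊢
    rwa [length_hom_residue h]
  | succ d ih =>
    obtain ⟨y, hy, hr⟩ := exists_regular (hL.1 0 d.succ_pos)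
    obtain ⟨x, rfl⟩ := h y
    have hs := ses_quot hr
    have hsR := hs.restrict (R := R)
    have he : (LinearMap.lsmul S L (algebraMap R S x)).restrictScalars R = LinearMap.lsmul R L x := by
      ext l; simp
    rw [he] at hsR
    exact (hsR.bass_iff ((mem_maximalIdeal_iff h x).1 hy)).1 (ih ((hs.bass_iff hy).2 hL))

/-- Depth and type do not depend on the ring, along a surjection of local rings. -/
lemma bass_ring_iff [IsNoetherianRing S] (h : Function.Surjective (algebraMap R S))
    [Module.Finite S L] {d : ℕ} {t : ℕ∞} : Bass S L d t ↔ Bass R L d t := by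
  refine ⟨Bass.restrict h, fun hL => ?_⟩
  rcases subsingleton_or_nontrivial L with hs | hs
  · exact absurd (ev_of_forall fun x => by
      have h1 : 𝟙 (ModuleCat.of R L) = 0 := by ext x; exact Subsingleton.elim _ _
      rw [← Abelian.Ext.comp_mk₀_id x, h1, Abelian.Ext.mk₀_zero, Abelian.Ext.comp_zero]) hL.not_ev
  · obtain ⟨d', t', h'⟩ := exists_bass (R := S) (M := L)
    obtain ⟨rfl, rfl⟩ := hL.unique (h'.restrict h)
    exact h'

omit [IsLocalRing R] [IsLocalRing S] in
lemma supportDim_ring_eq (h : Function.Surjective (algebraMap R S)) [Module.Finite S L] :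
    Module.supportDim S L = Module.supportDim R L := by
  have : Module.Finite R S := Module.Finite.of_surjective (Algebra.linearMap R S) h
  have : Module.Finite R L := Module.Finite.trans S L
  rw [Module.supportDim_eq_ringKrullDim_quotient_annihilator,
    Module.supportDim_eq_ringKrullDim_quotient_annihilator]
  let ψ := (Ideal.Quotient.mk (Module.annihilator S L)).comp (algebraMap R S)
  have hψ : Function.Surjective ψ := Ideal.Quotient.mk_surjective.comp h
  have hk : RingHom.ker ψ = Module.annihilator R L := by
    ext r
    rw [RingHom.mem_ker, RingHom.comp_apply, Ideal.Quotient.eq_zero_iff_mem,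
      Module.mem_annihilator, Module.mem_annihilator]
    simp
  rw [← hk]
  exact (RingEquiv.ringKrullDim (RingHom.quotientKerEquivOfSurjective hψ)).symm

end BassRing

/-! ### Modules of finite length and finite `G_C`-dimension -/

open IsLocalRing

section Package

variable {R : Type u} [CommRing R] {C : Type u} [AddCommGroup C] [Module R C]
variable {S : Type u} [CommRing S] [Algebra R S]
variable {L : Type u} [AddCommGroup L] [Module R L]

/-- A module killed by the kernel of a surjection `R → S` is an `S`-module. -/
lemma exists_module (h : Function.Surjective (algebraMap R S))
    (hk : ∀ r, algebraMap R S r = 0 → ∀ l : L, r • l = 0) :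
    ∃ _ : Module S L, IsScalarTower R S L := by
  have key (r r' : R) (hr : algebraMap R S r = algebraMap R S r') (l : L) : r • l = r' • l := by
    rw [← sub_eq_zero, ← sub_smul]
    exact hk _ (by rw [map_sub, hr, sub_self]) l
  let _ : SMul S L := ⟨fun s l => Function.surjInv h s • l⟩
  have hs (r : R) (l : L) : algebraMap R S r • l = r • l :=
    key _ _ (Function.surjInv_eq h _) l
  let _ : Module S L := Function.Surjective.moduleLeft (algebraMap R S) h hs
  exact ⟨inferInstance, IsScalarTower.of_algebraMap_smul hs⟩

/-- `C`-regular elements are regular on `R`, as `R = Hom(C, C)`. -/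
lemma SD.regular (hC : SD R C) {x : R} (hx : IsSMulRegular C x) (r : R) (hr : x * r = 0) :
    r = 0 := by
  refine hC.bij.1 ?_
  ext c
  apply hx
  simp [smul_smul, hr]

lemma ModReg.exists_module {D : Type u} [AddCommGroup D] [Module R D] {x : R} {π : C →ₗ[R] D}
    (h : ModReg S x π) (hL : ∀ l : L, x • l = 0) : ∃ _ : Module S L, IsScalarTower R S L := by
  refine _root_.exists_module h.surj fun r hr l => ?_
  obtain ⟨s, rfl⟩ := (h.ker r).1 hr
  rw [mul_comm, mul_smul, hL, smul_zero]

open scoped Pointwise in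
/-- The ring `R/x` for a `C`-regular element `x` of the maximal ideal. -/
lemma SD.exists_modReg [IsLocalRing R] [IsNoetherianRing R] (hC : SD R C) {x : R}
    (hx : IsSMulRegular C x) (hm : x ∈ maximalIdeal R) :
    ∃ (S : Type u) (_ : CommRing S) (_ : IsLocalRing S) (_ : IsNoetherianRing S) (_ : Algebra R S)
      (_ : Module S (QuotSMulTop x C)) (_ : IsScalarTower R S (QuotSMulTop x C)),
      ModReg S x (x • (⊤ : Submodule R C)).mkQ := by
  have hs := ses_quot hx
  have hne : Nontrivial (R ⧸ Ideal.span {x}) := by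
    refine Ideal.Quotient.nontrivial_iff.2 fun h => ?_
    have : Ideal.span {x} ≤ maximalIdeal R := by rwa [Ideal.span_singleton_le_iff_mem]
    exact (maximalIdeal.isMaximal R).ne_top (top_le_iff.1 (h ▸ this))
  have hsurj : Function.Surjective (algebraMap R (R ⧸ Ideal.span {x})) :=
    Ideal.Quotient.mk_surjective
  have hloc : IsLocalRing (R ⧸ Ideal.span {x}) := IsLocalRing.of_surjective' _ hsurj
  have hreg : ModReg (R ⧸ Ideal.span {x}) x (x • (⊤ : Submodule R C)).mkQ :=
    { surj := hsurj
      ker := fun r => by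
        rw [Ideal.Quotient.algebraMap_eq, Ideal.Quotient.eq_zero_iff_mem,
          Ideal.mem_span_singleton']
        simp [mul_comm]
      regR := hC.regular hx
      regC := fun c hc => hx (by simpa using hc)
      π_surj := hs.surj
      π_ker := hs.exact }
  obtain ⟨i1, i2⟩ := hreg.exists_module (L := QuotSMulTop x C) fun l => by
    obtain ⟨c, rfl⟩ := hs.surj l
    rw [← map_smul]
    exact (hs.exact _).2 ⟨c, rfl⟩
  exact ⟨_, inferInstance, hloc, inferInstance, inferInstance, i1, i2, hreg⟩

lemma residue_equiv [IsLocalRing R] [IsLocalRing S] (h : Function.Surjective (algebraMap R S)) :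
    Nonempty (ResidueField S ≃ₗ[R] ResidueField R) := by
  let φ : R →ₗ[R] ResidueField S := Algebra.linearMap R (ResidueField S)
  have hφ : Function.Surjective φ := residue_surjective.comp h
  have hk : LinearMap.ker φ = maximalIdeal R := by
    ext r
    rw [LinearMap.mem_ker, ← mem_maximalIdeal_iff h, ← residue_eq_zero_iff]
    rfl
  exact ⟨((Submodule.quotEquivOfEq _ _ hk).symm.trans (φ.quotKerEquivOfSurjective hφ)).symm⟩

end Package

section Artin

variable {R : Type u} [CommRing R] [IsLocalRing R] {C : Type u} [AddCommGroup C] [Module R C]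
variable {M L : Type u} [AddCommGroup M] [Module R M] [AddCommGroup L] [Module R L]

lemma simple_equiv [IsSimpleModule R L] : Nonempty (ResidueField R ≃ₗ[R] L) := by
  obtain ⟨I, hI, ⟨e⟩⟩ := isSimpleModule_iff_quot_maximal.1 (‹IsSimpleModule R L›)
  rw [IsLocalRing.eq_maximalIdeal hI] at e
  exact ⟨e.symm⟩

instance : IsSimpleModule R (ResidueField R) :=
  isSimpleModule_iff_quot_maximal.2 ⟨maximalIdeal R, inferInstance, ⟨LinearEquiv.refl _ _⟩⟩

/-- A property of modules which holds for `0` and `k` and is stable under extensions by `k`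
holds for modules of finite length. -/
lemma IsFiniteLength.ind {p : (L : Type u) → [AddCommGroup L] → [Module R L] → Prop}
    (h0 : ∀ (L : Type u) [AddCommGroup L] [Module R L] [Subsingleton L], p L)
    (hs : ∀ (L : Type u) [AddCommGroup L] [Module R L] (N : Submodule R L),
      IsFiniteLength R N → Nonempty (ResidueField R ≃ₗ[R] L ⧸ N) → p N → p L)
    (hL : IsFiniteLength R L) : p L := by
  induction hL with
  | of_subsingleton => exact h0 _
  | of_simple_quotient hN ih => exact hs _ _ hN simple_equiv ih

lemma IsFiniteLength.ev (hL : IsFiniteLength R L) {i : ℕ} (h : EV R (ResidueField R) C i) :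
    EV R L C i :=
  hL.ind (p := fun L _ _ => EV R L C i) (fun _ _ _ _ => ev_of_subsingleton_left i)
    fun _ _ _ N _ e hN => (SES.of_sub N).ev_mid hN (h.congr_left e.some)

omit [IsLocalRing R] in
/-- `length Hom(B, C) ≤ length Hom(Q, C) + length Hom(A, C)`, with equality only if
`Hom(B, C) → Hom(A, C)` is onto. -/
lemma SES.length_dual {A B Q : Type u} [AddCommGroup A] [AddCommGroup B] [AddCommGroup Q]
    [Module R A] [Module R B] [Module R Q] {f : A →ₗ[R] B} {g : B →ₗ[R] Q} (h : SES R f g) :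
    Module.length R (B →ₗ[R] C) = Module.length R (Q →ₗ[R] C) +
      Module.length R (LinearMap.range (dualMapC R C f)) := by
  refine Module.length_eq_add_of_exact (dualMapC R C g) (dualMapC R C f).rangeRestrict
    (LinearMap.lcomp_injective_of_surjective g h.surj) (LinearMap.surjective_rangeRestrict _)
    fun φ => ?_
  rw [← h.dual_exact φ, Subtype.ext_iff]
  rfl

/-- If `Hom(k, C)` has length one, then dualizing into `C` does not increase length. -/
lemma IsFiniteLength.length_dual_le (ht : Module.length R (ResidueField R →ₗ[R] C) = 1)
    (hL : IsFiniteLength R L) : Module.length R (L →ₗ[R] C) ≤ Module.length R L := by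
  refine hL.ind (p := fun L _ _ => Module.length R (L →ₗ[R] C) ≤ Module.length R L)
    (fun L _ _ _ => ?_) fun L _ _ N _ e hN => ?_
  · rw [Module.length_eq_zero_iff.2 inferInstance]
    exact zero_le
  · have e' : (ResidueField R →ₗ[R] C) ≃ₗ[R] (L ⧸ N →ₗ[R] C) := LinearEquiv.congrLeft C R e.some
    rw [(SES.of_sub N).length_dual (C := C), ← e'.length_eq, ht,
      Module.length_eq_add_of_exact N.subtype N.mkQ N.injective_subtype N.mkQ_surjective
        (LinearMap.exact_subtype_mkQ N), ← e.some.length_eq, Module.length_eq_one R (ResidueField R), add_comm]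
    exact add_le_add_left ((Module.length_le_of_injective _ (Submodule.injective_subtype _)).trans hN) _

/-- In depth zero and type one, counting lengths shows that every map `ker (M → k) → C` extends
to `M`, whence `Ext^i(k, C) = 0` for all `i > 0`. -/
lemma TR.ev_residue_of_type_one [Nontrivial M] (hM : TR R C M) (hfl : IsFiniteLength R M)
    (ht : Module.length R (ResidueField R →ₗ[R] C) = 1) {i : ℕ} (hi : 0 < i) :
    EV R (ResidueField R) C i := by
  have := hM.fin
  obtain ⟨g, hg⟩ := exists_surj_residue (R := R) (M := M)
  have hs := SES.of_surj hg
  have hMt : Module.length R M ≠ ⊤ := Module.length_ne_top_iff.2 hfl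
  have hLM := Module.length_eq_add_of_exact _ g hs.inj hs.surj hs.exact
  have hLt : Module.length R (LinearMap.ker g) ≠ ⊤ := fun h => hMt (by rw [hLM, h, top_add])
  have hL := Module.length_ne_top_iff.1 hLt
  have hFLle := hL.length_dual_le ht
  have hFLt : Module.length R (LinearMap.ker g →ₗ[R] C) ≠ ⊤ := ne_top_of_le_ne_top hLt hFLle
  have hFM : Module.length R (M →ₗ[R] C) = Module.length R M := by
    have h1 := hfl.length_dual_le ht
    refine le_antisymm h1 ?_
    rw [(LinearEquiv.ofBijective _ hM.bij).length_eq]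
    exact (Module.length_ne_top_iff.1 (ne_top_of_le_ne_top hMt h1)).length_dual_le ht
  have htop : LinearMap.range (dualMapC R C (LinearMap.ker g).subtype) = ⊤ := by
    by_contra hne
    obtain ⟨_, _⟩ := isFiniteLength_iff_isNoetherian_isArtinian.1 (Module.length_ne_top_iff.1 hFLt)
    have hlt := (Submodule.length_lt hne).trans_le hFLle
    have h2 := hs.length_dual (C := C)
    rw [hFM, hLM, ht, Module.length_eq_one R (ResidueField R), add_comm] at h2
    exact hlt.ne' ((ENat.add_right_injective_of_ne_top ENat.one_ne_top h2))
  have h1 : EV R (ResidueField R) C 1 :=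
    hs.ev_one (hM.ext 1 one_pos) fun φ => LinearMap.range_eq_top.1 htop φ
  induction i, hi using Nat.le_induction with
  | base => exact h1
  | succ i hi ih => exact hs.ev_right (hL.ev ih) (hM.ext _ (by omega))

/-- In depth zero, `Hom(k, C)` embeds into the socle of `M`, as `Hom(M, C)` maps onto `k`. -/
lemma TR.length_residue_dual_le [IsNoetherianRing R] [Module.Finite R C] [Nontrivial M]
    (hM : TR R C M) :
    Module.length R (ResidueField R →ₗ[R] C) ≤ Module.length R (ResidueField R →ₗ[R] M) := by
  have := hM.fin
  have : Nontrivial (M →ₗ[R] C) := by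
    by_contra h
    rw [not_nontrivial_iff_subsingleton] at h
    exact not_subsingleton M hM.bij.1.subsingleton
  obtain ⟨g, hg⟩ := exists_surj_residue (R := R) (M := M →ₗ[R] C)
  let e := LinearEquiv.ofBijective _ hM.bij
  let φ : (ResidueField R →ₗ[R] C) →ₗ[R] M := e.symm.toLinearMap ∘ₗ dualMapC R C g
  have hφ : Function.Injective φ := e.symm.injective.comp (LinearMap.lcomp_injective_of_surjective g hg)
  rw [(hom_residue_equiv (R := R) (L := M)).some.length_eq]
  refine Module.length_le_of_injective (φ.codRestrict _ fun f => ?_) fun a b hab => ?_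
  · rw [Submodule.mem_torsionBySet_iff]
    rintro ⟨a, ha⟩
    have : a • f = 0 := by
      ext c
      rw [LinearMap.smul_apply, ← map_smul, residue_smul ha, map_zero, LinearMap.zero_apply]
    change a • φ f = 0
    rw [← map_smul, this, map_zero]
  · exact hφ (congrArg Subtype.val hab)

end Artin

/-- The heart of the matter: over a local ring, a nonzero module `M` of finite length and finite
`G_C`-dimension forces `Ext^i(k, C) = 0` for large `i` as soon as `C` has type one, and `C` has
type one as soon as the socle of `M` is simple. Induct on `depth C`, dividing by a `C`-regular
element that annihilates `M`. -/
theorem finite_length_key (d : ℕ) : ∀ (R : Type u) [CommRing R] [IsLocalRing R] [IsNoetherianRing R]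
    (C : Type u) [AddCommGroup C] [Module R C] (M : Type u) [AddCommGroup M] [Module R M]
    [Nontrivial M] (n : ℕ) (t : ℕ∞), SD R C → Bass R C d t → IsFiniteLength R M → FR R C n M →
    (t = 1 → ∃ N, ∀ i, N < i → EV R (ResidueField R) C i) ∧
      (Module.length R (ResidueField R →ₗ[R] M) = 1 → t = 1) := by
  induction d with
  | zero =>
    intro R _ _ _ C _ _ M _ _ _ n t hC hB hM hF
    obtain ⟨ht, ht0⟩ := bass_zero_iff.1 hB
    have : Nontrivial (ResidueField R →ₗ[R] C) := by
      by_contra h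
      rw [not_nontrivial_iff_subsingleton] at h
      exact ht0 (ht ▸ Module.length_eq_zero_iff.2 h)
    have hMt := hF.tr_of_socle hC
    have := hC.fin
    refine ⟨fun h1 => ⟨0, fun i hi => hMt.ev_residue_of_type_one hM (ht.trans h1) hi⟩, fun h1 => ?_⟩
    have := hMt.length_residue_dual_le
    rw [ht, h1] at this
    exact le_antisymm this (Order.one_le_iff_ne_zero.2 ht0)
  | succ d ih =>
    intro R _ _ _ C _ _ M _ _ _ n t hC hB hM hF
    have := hC.fin
    have := hF.fin
    obtain ⟨x, hxM, hx⟩ := exists_regular_ann (hM.ev (hB.1 0 (by omega)))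
    rw [Module.mem_annihilator] at hxM
    have hxm : x ∈ maximalIdeal R := by
      by_contra h
      obtain ⟨m, hm⟩ := exists_ne (0 : M)
      rw [mem_maximalIdeal, mem_nonunits_iff, not_not] at h
      exact hm ((h.smul_eq_zero).1 (hxM m))
    obtain ⟨S, _, _, _, _, _, _, h⟩ := hC.exists_modReg hx hxm
    obtain ⟨_, _⟩ := h.exists_module hxM
    have : Module.Finite S (QuotSMulTop x C) := Module.Finite.of_restrictScalars_finite R S _
    have hB' := (bass_ring_iff h.surj).2 (((ses_quot hx).bass_iff hxm).2 hB)
    have hM' : IsFiniteLength S M := by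
      rw [← Module.length_ne_top_iff, ← Module.length_eq_of_surjective h.surj]
      exact Module.length_ne_top_iff.2 hM
    obtain ⟨h1, h2⟩ := ih S _ M n t (h.sd hC) hB' hM' (h.fr_descend hC hF)
    rw [length_hom_residue h.surj]
    refine ⟨fun ht => ?_, h2⟩
    obtain ⟨N, hN⟩ := h1 ht
    refine ⟨N + 1, fun i hi => ?_⟩
    obtain ⟨i, rfl⟩ : ∃ j, i = j + 1 := ⟨i - 1, by omega⟩
    exact ((h.ev_iff i).1 (hN i (by omega))).congr_left (residue_equiv h.surj).some

/-! ### Finite injective dimension from vanishing of `Ext^i(k, -)` -/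

section InjDim

variable {R : Type u} [CommRing R]

lemma ev_of_baer {X : Type u} [AddCommGroup X] [Module R X]
    (h : ∀ J : Ideal R, EV R (R ⧸ J) X 1) (N : Type u) [AddCommGroup N] [Module R N] {i : ℕ}
    (hi : 0 < i) : EV R N X i := by
  have hb : Module.Baer R X := fun J φ => by
    obtain ⟨ψ, hψ⟩ := (SES.of_sub J).extend (h J) φ
    exact ⟨ψ, fun x hx => LinearMap.congr_fun hψ ⟨x, hx⟩⟩
  have := hb.injective
  have : CategoryTheory.Injective (ModuleCat.of R X) := Module.injective_object_of_injective_module R X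
  obtain ⟨j, rfl⟩ : ∃ j, i = j + 1 := ⟨i - 1, by omega⟩
  exact Abelian.Ext.subsingleton_of_injective _ _ j

lemma exists_injective_ses (X : Type u) [AddCommGroup X] [Module R X] :
    ∃ (I Q : Type u) (_ : AddCommGroup I) (_ : Module R I) (_ : AddCommGroup Q) (_ : Module R Q)
      (f : X →ₗ[R] I) (g : I →ₗ[R] Q), SES R f g ∧
        ∀ (N : Type u) [AddCommGroup N] [Module R N] (i : ℕ), 0 < i → EV R N I i := by
  let ι := Injective.ι (ModuleCat.of R X)
  refine ⟨_, _, _, _, _, _, ι.hom, (LinearMap.range ι.hom).mkQ,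
    ⟨(ModuleCat.mono_iff_injective ι).1 inferInstance, Submodule.mkQ_surjective _,
      LinearMap.exact_map_mkQ_range _⟩, fun N _ _ i hi => ?_⟩
  obtain ⟨j, rfl⟩ : ∃ j, i = j + 1 := ⟨i - 1, by omega⟩
  exact Abelian.Ext.subsingleton_of_injective _ (Injective.under (ModuleCat.of R X)) j

/-- Injective dimension is detected by cyclic modules: apply Baer's criterion to a cosyzygy. -/
lemma ev_of_cyclic (n : ℕ) {X : Type u} [AddCommGroup X] [Module R X]
    (h : ∀ J : Ideal R, EV R (R ⧸ J) X (n + 1)) (N : Type u) [AddCommGroup N] [Module R N] {i : ℕ}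
    (hi : n < i) : EV R N X i := by
  induction n generalizing X i with
  | zero => exact ev_of_baer h N hi
  | succ n ih =>
    obtain ⟨I, Q, _, _, _, _, f, g, hs, hI⟩ := exists_injective_ses (R := R) X
    obtain ⟨j, rfl⟩ : ∃ j, i = j + 1 := ⟨i - 1, by omega⟩
    exact hs.ev_left' (hI N _ (by omega))
      (ih (fun J => hs.ev_right' (h J) (hI _ _ (by omega))) (by omega))

/-- Finite injective dimension is uniform vanishing of `Ext^i(-, X)` in high degrees. -/
lemma injDim_lt_top_iff {X : Type u} [AddCommGroup X] [Module R X] :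
    injDim R X < ⊤ ↔ ∃ n : ℕ, ∀ (N : Type u) [AddCommGroup N] [Module R N] (i : ℕ), n < i →
      EV R N X i := by
  rw [injDim, sInf_lt_iff]
  constructor
  · rintro ⟨n, hn, hlt⟩
    lift n to ℕ using hlt.ne
    exact ⟨n, fun N _ _ i hi => ev_iff_extM.2 (hn N _ _ i (by exact_mod_cast hi))⟩
  · rintro ⟨n, hn⟩
    exact ⟨n, fun N _ _ i hi => ev_iff_extM.1 (hn N i (by exact_mod_cast hi)), ENat.natCast_lt_top n⟩

lemma quotient_regular (p : PrimeSpectrum R) {x : R} (hx : x ∉ p.1) :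
    IsSMulRegular (R ⧸ p.1) x := by
  have := p.2
  intro a b hab
  have hx0 : Ideal.Quotient.mk p.1 x ≠ 0 := fun h0 => hx (Ideal.Quotient.eq_zero_iff_mem.1 h0)
  exact mul_left_cancel₀ hx0 (by simpa [Algebra.smul_def] using hab)

variable [IsLocalRing R] [IsNoetherianRing R]
variable {C N Q : Type u} [AddCommGroup C] [Module R C] [AddCommGroup N] [Module R N]
  [AddCommGroup Q] [Module R Q]

open IsLocalRing

/-- Nakayama's lemma for `Ext`. -/
lemma SES.ev_of_smul [Module.Finite R C] [Module.Finite R N] {x : R} {π : N →ₗ[R] Q}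
    (h : SES R (LinearMap.lsmul R N x) π) (hx : x ∈ maximalIdeal R) {i : ℕ}
    (hQ : EV R Q C (i + 1)) : EV R N C i := by
  have hfin : Module.Finite R (E R N C i) := ModuleCat.finite_ext R _ _ i
  have hsurj (α : E R N C i) : ∃ β : E R N C i, x • β = α := by
    obtain ⟨β, hβ⟩ := Abelian.Ext.contravariant_sequence_exact₁ h.shortExact _ α (add_comm 1 i)
      (hQ.eq_zero _)
    refine ⟨β, hβ ▸ ?_⟩
    have : ModuleCat.ofHom (LinearMap.lsmul R N x) = x • 𝟙 (ModuleCat.of R N) := by ext; simp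
    change _ = (Abelian.Ext.mk₀ (ModuleCat.ofHom (LinearMap.lsmul R N x))).comp β (zero_add i)
    rw [this, Abelian.Ext.mk₀_smul, Abelian.Ext.smul_comp, Abelian.Ext.mk₀_id_comp]
  have htop : (⊤ : Submodule R (E R N C i)) ≤ maximalIdeal R • ⊤ := by
    intro α _
    obtain ⟨β, rfl⟩ := hsurj α
    exact Submodule.smul_mem_smul hx trivial
  have := Submodule.eq_bot_of_le_smul_of_le_jacobson_bot _ _ hfin.fg_top htop
    (IsLocalRing.maximalIdeal_le_jacobson _)
  exact (Submodule.subsingleton_iff R).1 (subsingleton_of_bot_eq_top this.symm)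

/-- Vanishing of `Ext^i(k, C)` in high degrees propagates to all finitely generated modules, by
Noetherian induction on primes: for `p ≠ m` and `x ∈ m \ p`, use `0 → R/p → R/p → R/(p, x) → 0`. -/
lemma ev_of_residue [Module.Finite R C] {n : ℕ} (h : ∀ i, n < i → EV R (ResidueField R) C i)
    [Module.Finite R N] {i : ℕ} (hi : n < i) : EV R N C i := by
  suffices H : ∀ (I : Ideal R) (N : Type u) [AddCommGroup N] [Module R N] [Module.Finite R N],
      (∀ r ∈ I, ∀ y : N, r • y = 0) → ∀ i, n < i → EV R N C i from
    H ⊥ N (by rintro r hr y; rw [(Submodule.mem_bot R).1 hr, zero_smul]) i hi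
  intro I
  induction I using IsNoetherian.induction with
  | hgt I ih =>
  intro N _ _ hN
  induction hN using IsNoetherianRing.induction_on_isQuotientEquivQuotientPrime R with
  | subsingleton N => exact fun _ i _ => ev_of_subsingleton_left i
  | exact N₁ N₂ N₃ f g hf hg hfg h₁ h₃ =>
    intro hI i hi
    refine SES.ev_mid ⟨hf, hg, hfg⟩ (h₁ (fun r hr y => hf ?_) i hi) (h₃ (fun r hr y => ?_) i hi)
    · rw [map_smul, hI r hr, map_zero]
    · obtain ⟨y, rfl⟩ := hg y
      rw [← map_smul, hI r hr, map_zero]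
  | quotient N p e =>
    intro hI i hi
    refine EV.congr_left e.symm ?_
    have hIp : I ≤ p.1 := fun r hr => by
      have := hI r hr (e.symm 1)
      rwa [← map_smul, LinearEquiv.map_eq_zero_iff, Algebra.smul_def, mul_one,
        Ideal.Quotient.algebraMap_eq, Ideal.Quotient.eq_zero_iff_mem] at this
    have hp (r : R) (hr : r ∈ p.1) (y : R ⧸ p.1) : r • y = 0 := by
      rw [Algebra.smul_def, Ideal.Quotient.algebraMap_eq, Ideal.Quotient.eq_zero_iff_mem.2 hr,
        zero_mul]
    rcases hIp.lt_or_eq with hlt | rfl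
    · exact ih _ hlt _ hp i hi
    have hpm : p.1 ≤ maximalIdeal R := le_maximalIdeal p.2.ne_top
    rcases hpm.lt_or_eq with hlt | heq
    · obtain ⟨x, hxm, hxp⟩ := Set.exists_of_ssubset hlt
      have hs := ses_quot (quotient_regular p hxp)
      refine hs.ev_of_smul hxm (ih (p.1 ⊔ Ideal.span {x}) ?_ _ ?_ (i + 1) (by omega))
      · refine lt_of_le_of_ne le_sup_left fun h0 => hxp ?_
        rw [h0]
        exact Ideal.mem_sup_right (Ideal.mem_span_singleton_self x)
      · intro r hr y
        obtain ⟨a, ha, b, hb, rfl⟩ := Submodule.mem_sup.1 hr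
        obtain ⟨c, rfl⟩ := Ideal.mem_span_singleton'.1 hb
        obtain ⟨y, rfl⟩ := hs.surj y
        rw [← map_smul, add_smul, hp a ha, zero_add, mul_comm, mul_smul]
        exact (hs.exact _).2 ⟨c • y, rfl⟩
    · have e' : ResidueField R ≃ₗ[R] R ⧸ p.1 := Submodule.quotEquivOfEq _ _ heq.symm
      exact (h i hi).congr_left e'

/-- Injective dimension is detected by the residue field. -/
lemma injDim_lt_top_of_residue [Module.Finite R C]
    (h : ∃ n, ∀ i, n < i → EV R (ResidueField R) C i) : injDim R C < ⊤ := by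
  obtain ⟨n, hn⟩ := h
  exact injDim_lt_top_iff.2 ⟨n, fun N _ _ i hi =>
    ev_of_cyclic n (fun J => ev_of_residue hn (by omega)) N hi⟩

end InjDim

/-! ### Cohen-Macaulay modules of finite `G_C`-dimension -/

section CM

open IsLocalRing

variable {R : Type u} [CommRing R] [IsLocalRing R] [IsNoetherianRing R]
variable {C M : Type u} [AddCommGroup C] [Module R C] [AddCommGroup M] [Module R M]

lemma finite_length_of_support [Module.Finite R M]
    (h : ∀ p ∈ Module.support R M, p.asIdeal = maximalIdeal R) : IsFiniteLength R M := by
  rename_i hM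
  induction hM using IsNoetherianRing.induction_on_isQuotientEquivQuotientPrime R with
  | subsingleton N => exact .of_subsingleton
  | exact N₁ N₂ N₃ f g hf hg hfg h₁ h₃ =>
    rw [Module.support_of_exact hfg hf hg] at h
    rw [← Module.length_ne_top_iff, Module.length_eq_add_of_exact f g hf hg hfg]
    exact WithTop.add_ne_top.2 ⟨Module.length_ne_top_iff.2 (h₁ fun p hp => h p (.inl hp)),
      Module.length_ne_top_iff.2 (h₃ fun p hp => h p (.inr hp))⟩
  | quotient N p e =>
    have hp := h p (by
      rw [e.support_eq, Module.mem_support_iff_of_finite, Ideal.annihilator_quotient])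
    have e' : ResidueField R ≃ₗ[R] R ⧸ p.1 := Submodule.quotEquivOfEq _ _ hp.symm
    exact (e'.trans e.symm).isFiniteLength (Module.length_ne_top_iff.1 (by
      rw [Module.length_eq_one R (ResidueField R)]; exact ENat.one_ne_top))

/-- Dividing by a maximal `M`-regular sequence reduces the Cohen-Macaulay case to modules of finite
length. -/
theorem cohenMacaulay_key (hC : SD R C) {d : ℕ} {t : ℕ∞} (hB : Bass R C d t) (e : ℕ) :
    ∀ (M : Type u) [AddCommGroup M] [Module R M] (n : ℕ) (s : ℕ∞), FR R C n M → Bass R M e s →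
      Module.supportDim R M = e →
      (t = 1 → ∃ N, ∀ i, N < i → EV R (ResidueField R) C i) ∧ (s = 1 → t = 1) := by
  induction e with
  | zero =>
    intro M _ _ n s hF hM hd
    have := hF.fin
    have hnt : Nontrivial M := by
      rw [← Module.supportDim_ne_bot_iff_nontrivial R, hd]
      simp
    have hfl : IsFiniteLength R M := finite_length_of_support fun p hp => by
      rw [support_of_supportDim_eq_zero R M (by simpa using hd),
        PrimeSpectrum.mem_zeroLocus, SetLike.coe_subset_coe] at hp
      exact (IsLocalRing.maximalIdeal.isMaximal R).eq_of_le p.2.ne_top hp |>.symm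
    obtain ⟨h1, h2⟩ := finite_length_key d R C M n t hC hB hfl hF
    exact ⟨h1, fun hs => h2 ((bass_zero_iff.1 hM).1.trans hs)⟩
  | succ e ih =>
    intro M _ _ n s hF hM hd
    have := hF.fin
    obtain ⟨y, hy, hreg⟩ := exists_regular (hM.1 0 (by omega))
    have hq := ses_quot hreg
    refine ih (QuotSMulTop y M) (n + 1) s (hq.fr_right hC hF hF) ((hq.bass_iff hy).2 hM) ?_
    have h1 := Module.supportDim_quotSMulTop_succ_eq_supportDim hreg hy
    rw [hd] at h1
    generalize Module.supportDim R (QuotSMulTop y M) = a at h1 ⊢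
    induction a with
    | bot => exact absurd h1 (by rw [WithBot.bot_add]; exact WithBot.bot_ne_natCast (e + 1))
    | coe a =>
      norm_cast at h1 ⊢
      exact ENat.add_left_injective_of_ne_top ENat.one_ne_top (by simpa using h1)

omit [IsNoetherianRing R] in
lemma SD.nontrivial (hC : SD R C) : Nontrivial C := by
  by_contra h
  rw [not_nontrivial_iff_subsingleton] at h
  exact zero_ne_one (hC.bij.1 (a₁ := 0) (a₂ := 1) (by ext c; exact Subsingleton.elim _ _))

lemma IsCohenMacaulayModule.bass [Nontrivial M] (hM : IsCohenMacaulayModule R M) :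
    ∃ d, Bass R M d (rtype R M) ∧ Module.supportDim R M = d := by
  have := hM.1
  obtain ⟨d, t, h⟩ := exists_bass (R := R) (M := M)
  refine ⟨d, h.rtype_eq ▸ h, ?_⟩
  rw [Module.supportDim, ← hM.2, h.depth_eq]
  rfl

/-- A nonzero Cohen-Macaulay module `M` of finite `G_C`-dimension makes `C` dualizing as soon as
`C` or `M` has type one. -/
theorem isDualizing_of_cohenMacaulay [Nontrivial M] (hC : IsSemidualizing R C)
    (hM : IsCohenMacaulayModule R M) (hF : HasFiniteGCDim R C M)
    (ht : rtype R C = 1 ∨ rtype R M = 1) : IsDualizing R C := by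
  have hC' := sd_iff.2 hC
  have := hC'.fin
  have := hC'.nontrivial
  obtain ⟨d, t, hB⟩ := exists_bass (R := R) (M := C)
  obtain ⟨e, hM', hd⟩ := hM.bass
  obtain ⟨n, hF⟩ := hF
  obtain ⟨h1, h2⟩ := cohenMacaulay_key hC' hB e M n _ (fr_of_gcDimLE hC' hF) hM' hd
  rw [hB.rtype_eq] at ht
  exact ⟨hC, injDim_lt_top_of_residue (h1 (ht.elim id h2))⟩

end CM

/-! ### A dualizing module is Cohen-Macaulay of type one -/

section DualizingCM

open IsLocalRing

variable {R : Type u} [CommRing R] [IsLocalRing R]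
variable {C L : Type u} [AddCommGroup C] [Module R C] [AddCommGroup L] [Module R L]

lemma IsFiniteLength.support (hL : IsFiniteLength R L) :
    ∀ p ∈ Module.support R L, p.asIdeal = maximalIdeal R := by
  refine hL.ind (p := fun L _ _ => ∀ p ∈ Module.support R L, p.asIdeal = maximalIdeal R) ?_ ?_
  · intro L _ _ _ p hp
    rw [Module.support_eq_empty] at hp
    exact hp.elim
  · intro L _ _ N _ ⟨e⟩ h p hp
    have hs := SES.of_sub N
    rw [Module.support_of_exact hs.exact hs.inj hs.surj] at hp
    refine hp.elim (h p) fun hp => ?_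
    rw [← e.support_eq, Module.mem_support_iff_of_finite] at hp
    exact ((maximalIdeal.isMaximal R).eq_of_le p.2.ne_top fun x hx =>
      hp (Module.mem_annihilator.2 fun c => residue_smul hx c)).symm

lemma IsFiniteLength.supportDim [Nontrivial L] (hL : IsFiniteLength R L) :
    Module.supportDim R L = 0 := by
  have h1 : Subsingleton (Module.support R L) := ⟨fun p q => Subtype.ext (PrimeSpectrum.ext
    ((hL.support p p.2).trans (hL.support q q.2).symm))⟩
  have h2 : Nonempty (Module.support R L) := (Module.nonempty_support_of_nontrivial).to_subtype
  exact Order.krullDim_eq_zero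

lemma hom_residue_smul {x : R} (hx : x ∈ maximalIdeal R) (f : ResidueField R →ₗ[R] L) :
    x • f = 0 := by
  ext c
  rw [LinearMap.smul_apply, ← map_smul, residue_smul hx, map_zero, LinearMap.zero_apply]

lemma residue_injective {f : ResidueField R →ₗ[R] L} (hf : f ≠ 0) : Function.Injective f :=
  (LinearMap.injective_or_eq_zero f).resolve_right hf

variable [IsNoetherianRing R]

omit [IsNoetherianRing R] in
/-- In depth zero the residue field embeds into `R = Hom(C, C)`, through `C → k → C`. -/
lemma SD.exists_residue_embedding (hC : SD R C) {f : ResidueField R →ₗ[R] C} (hf : f ≠ 0) :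
    ∃ j : ResidueField R →ₗ[R] R, Function.Injective j := by
  have := hC.fin
  have := hC.nontrivial
  obtain ⟨g, hg⟩ := exists_surj_residue (R := R) (M := C)
  obtain ⟨r, hr⟩ := hC.bij.2 (f ∘ₗ g)
  replace hr : r • (LinearMap.id : C →ₗ[R] C) = f ∘ₗ g := hr
  have hk : maximalIdeal R ≤ LinearMap.ker (LinearMap.toSpanSingleton R R r) := by
    intro x hx
    rw [LinearMap.mem_ker, LinearMap.toSpanSingleton_apply]
    refine hC.bij.1 ?_
    change (x • r) • (LinearMap.id : C →ₗ[R] C) = (0 : R) • LinearMap.id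
    rw [smul_assoc, hr, ← LinearMap.smul_comp, hom_residue_smul hx, LinearMap.zero_comp, zero_smul]
  let j : ResidueField R →ₗ[R] R := Submodule.liftQ (maximalIdeal R) _ hk
  refine ⟨j, residue_injective fun hj => hf ?_⟩
  have h1 : j (residue R 1) = r := one_smul R r
  rw [hj, LinearMap.zero_apply] at h1
  rw [← h1, zero_smul] at hr
  ext c
  obtain ⟨c, rfl⟩ := hg c
  exact (LinearMap.congr_fun hr c).symm

/-- In depth zero, finite injective dimension means that `C` is injective: `k ↪ R` pushes the
vanishing of `Ext^i(-, C)` down to degree one. -/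
lemma SD.ev_of_depth_zero (hC : SD R C) {j : ResidueField R →ₗ[R] R} (hj : Function.Injective j)
    {n : ℕ} (h : ∀ i, n < i → EV R (ResidueField R) C i) (N : Type u) [AddCommGroup N] [Module R N]
    [Module.Finite R N] {i : ℕ} (hi : 0 < i) : EV R N C i := by
  have := hC.fin
  induction n with
  | zero => exact ev_of_residue h hi
  | succ n ih =>
    have hs : SES R j (LinearMap.range j).mkQ :=
      ⟨hj, Submodule.mkQ_surjective _, LinearMap.exact_map_mkQ_range j⟩
    exact ih fun i hi => hs.ev_left (ev_proj' (by omega)) (ev_of_residue h (by omega))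

/-- If `Ext^i(-, C)` vanishes on finitely generated modules for `i > 0`, then `Hom(R/p, C) = 0` for
nonmaximal primes `p`, so that a prime filtration of `N` bounds the length of `Hom(N, C)`. -/
lemma finite_length_dual [Module.Finite R C]
    (h : ∀ (N : Type u) [AddCommGroup N] [Module R N] [Module.Finite R N], EV R N C 1)
    (N : Type u) [AddCommGroup N] [Module R N] [hN : Module.Finite R N] :
    IsFiniteLength R (N →ₗ[R] C) := by
  induction hN using IsNoetherianRing.induction_on_isQuotientEquivQuotientPrime R with
  | subsingleton N => exact .of_subsingleton
  | exact N₁ N₂ N₃ f g hf hg hfg h₁ h₃ =>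
    have hs := SES.dual ⟨hf, hg, hfg⟩ (h N₃)
    rw [← Module.length_ne_top_iff, Module.length_eq_add_of_exact _ _ hs.inj hs.surj hs.exact]
    exact WithTop.add_ne_top.2 ⟨Module.length_ne_top_iff.2 h₃, Module.length_ne_top_iff.2 h₁⟩
  | quotient N p e =>
    have hp : p.1 ≤ maximalIdeal R := le_maximalIdeal p.2.ne_top
    rcases hp.lt_or_eq with hlt | heq
    · obtain ⟨x, hxm, hxp⟩ := Set.exists_of_ssubset hlt
      have hs := ses_quot (quotient_regular p hxp)
      have := ev_zero_iff.1 ((hs.ev_of_smul (C := C) hxm (h _)).congr_left e.symm)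
      exact .of_subsingleton
    · have e' : ResidueField R ≃ₗ[R] R ⧸ p.1 := Submodule.quotEquivOfEq _ _ heq.symm
      have hfg : Module.Finite R (N →ₗ[R] C) := inferInstance
      refine finite_length_of_support fun q hq => ?_
      rw [Module.mem_support_iff_of_finite] at hq
      refine ((maximalIdeal.isMaximal R).eq_of_le q.2.ne_top fun x hx => hq ?_).symm
      rw [Module.mem_annihilator]
      intro φ
      ext y
      rw [LinearMap.smul_apply, ← map_smul, ← (e'.trans e.symm).apply_symm_apply (x • y), map_smul,
        residue_smul hx, map_zero, map_zero, LinearMap.zero_apply]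

omit [IsNoetherianRing R] in
/-- In depth zero, `R = Hom(C, C)` maps onto `Hom(k, C)` when `C` is injective. -/
lemma SD.length_residue_dual_le (hC : SD R C) {f : ResidueField R →ₗ[R] C} (hf : f ≠ 0)
    (h : ∀ (N : Type u) [AddCommGroup N] [Module R N] [Module.Finite R N], EV R N C 1) :
    Module.length R (ResidueField R →ₗ[R] C) ≤ 1 := by
  have := hC.fin
  have hs : SES R f (LinearMap.range f).mkQ :=
    ⟨residue_injective hf, Submodule.mkQ_surjective _, LinearMap.exact_map_mkQ_range f⟩
  have hk : maximalIdeal R ≤ LinearMap.ker (LinearMap.toSpanSingleton R _ f) := fun x hx => by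
    rw [LinearMap.mem_ker, LinearMap.toSpanSingleton_apply, hom_residue_smul hx]
  let j : ResidueField R →ₗ[R] (ResidueField R →ₗ[R] C) := Submodule.liftQ (maximalIdeal R) _ hk
  have hj : Function.Surjective j := by
    intro φ
    obtain ⟨ψ, rfl⟩ := hs.extend (h _) φ
    obtain ⟨r, rfl⟩ := hC.bij.2 ψ
    exact ⟨Submodule.Quotient.mk r, rfl⟩
  rw [← Module.length_eq_one R (ResidueField R)]
  exact Module.length_le_of_surjective j hj

/-- A semidualizing module of finite injective dimension is Cohen-Macaulay of type one. -/
theorem dualizing_bass (d : ℕ) : ∀ (R : Type u) [CommRing R] [IsLocalRing R] [IsNoetherianRing R]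
    (C : Type u) [AddCommGroup C] [Module R C] (t : ℕ∞), SD R C → Bass R C d t →
    (∃ n, ∀ i, n < i → EV R (ResidueField R) C i) → t = 1 ∧ Module.supportDim R C = d := by
  induction d with
  | zero =>
    intro R _ _ _ C _ _ t hC hB ⟨n, hn⟩
    have := hC.fin
    have := hC.nontrivial
    obtain ⟨ht, ht0⟩ := bass_zero_iff.1 hB
    obtain ⟨f, hf⟩ : ∃ f : ResidueField R →ₗ[R] C, f ≠ 0 := by
      by_contra! h
      have : Subsingleton (ResidueField R →ₗ[R] C) := subsingleton_of_forall_eq 0 h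
      exact ht0 (ht ▸ Module.length_eq_zero_iff.2 this)
    obtain ⟨j, hj⟩ := hC.exists_residue_embedding hf
    have hev : ∀ (N : Type u) [AddCommGroup N] [Module R N] [Module.Finite R N], EV R N C 1 :=
      fun N _ _ _ => hC.ev_of_depth_zero hj hn N one_pos
    have hfl := finite_length_dual hev (Fin 1 → R)
    refine ⟨le_antisymm (ht ▸ hC.length_residue_dual_le hf hev)
      (Order.one_le_iff_ne_zero.2 ht0), ?_⟩
    exact ((rankOneDual C (LinearEquiv.funUnique (Fin 1) R R)).isFiniteLength hfl).supportDim
  | succ d ih =>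
    intro R _ _ _ C _ _ t hC hB ⟨n, hn⟩
    have := hC.fin
    obtain ⟨x, hxm, hx⟩ := exists_regular (hB.1 0 (by omega))
    obtain ⟨S, _, _, _, _, _, _, h⟩ := hC.exists_modReg hx hxm
    have : Module.Finite S (QuotSMulTop x C) := Module.Finite.of_restrictScalars_finite R S _
    have hB' := (bass_ring_iff h.surj).2 (((ses_quot hx).bass_iff hxm).2 hB)
    obtain ⟨h1, h2⟩ := ih S _ t (h.sd hC) hB' ⟨n, fun i hi =>
      (h.ev_iff i).2 ((hn (i + 1) (by omega)).congr_left (residue_equiv h.surj).some.symm)⟩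
    refine ⟨h1, ?_⟩
    rw [← Module.supportDim_quotSMulTop_succ_eq_supportDim hx hxm, ← supportDim_ring_eq h.surj, h2]
    norm_cast

end DualizingCM

/-! ### The equivalences -/

section Final

open IsLocalRing

variable {R : Type u} [CommRing R] {C : Type u} [AddCommGroup C] [Module R C]
variable {S : Type u} [CommRing S] [Algebra R S]
variable {D L : Type u} [AddCommGroup D] [Module R D] [Module S D] [IsScalarTower R S D]

/-- `Ext` does not change along an isomorphism of rings. -/
lemma ev_ring_iff [IsNoetherianRing S] (h : Function.Bijective (algebraMap R S))
    [AddCommGroup L] [Module R L] [Module S L] [IsScalarTower R S L] [Module.Finite S L] (i : ℕ) :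
    EV S L D i ↔ EV R L D i := by
  let e : R ≃ₗ[R] S := LinearEquiv.ofBijective (Algebra.linearMap R S) h
  have : Module.Free R S := Module.Free.of_equiv e
  have : Module.Finite R S := Module.Finite.equiv e
  induction i generalizing L with
  | zero =>
    rw [ev_zero_iff, ev_zero_iff]
    exact ⟨fun _ => ⟨fun φ ψ => LinearMap.ext fun l => LinearMap.congr_fun (Subsingleton.elim
        (φ.extendScalarsOfSurjective h.2) (ψ.extendScalarsOfSurjective h.2)) l⟩,
      fun _ => ⟨fun φ ψ => LinearMap.restrictScalars_injective R (Subsingleton.elim _ _)⟩⟩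
  | succ i ih =>
    obtain ⟨b, g, hg⟩ := exists_cover (R := S) L
    have hs := SES.of_surj hg
    have hsR : SES R ((LinearMap.ker g).subtype.restrictScalars R) (g.restrictScalars R) :=
      ⟨hs.inj, hs.surj, hs.exact⟩
    cases i with
    | zero =>
      constructor
      · refine fun h1 => hsR.ev_one (ev_proj 0) fun φ => ?_
        obtain ⟨ψ, hψ⟩ := hs.extend h1 (φ.extendScalarsOfSurjective h.2)
        exact ⟨ψ.restrictScalars R, LinearMap.ext fun l => LinearMap.congr_fun hψ l⟩
      · refine fun h1 => hs.ev_one (ev_proj 0) fun φ => ?_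
        obtain ⟨ψ, hψ⟩ := hsR.extend h1 (φ.restrictScalars R)
        exact ⟨ψ.extendScalarsOfSurjective h.2, LinearMap.ext fun l => LinearMap.congr_fun hψ l⟩
    | succ i =>
      have e1 : EV S L D (i + 1 + 1) ↔ EV S (LinearMap.ker g) D (i + 1) :=
        ⟨fun hh => hs.ev_left (ev_proj _) hh, fun hh => hs.ev_right hh (ev_proj _)⟩
      have e2 : EV R L D (i + 1 + 1) ↔ EV R (LinearMap.ker g) D (i + 1) :=
        ⟨fun hh => hsR.ev_left (ev_proj _) hh, fun hh => hsR.ev_right hh (ev_proj _)⟩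
      exact e1.trans (ih.trans e2.symm)

/-- Being dualizing is invariant under isomorphisms of rings and modules. -/
lemma IsDualizing.of_bijective [IsNoetherianRing S] [IsLocalRing S]
    (h : Function.Bijective (algebraMap R S)) (e : C ≃ₗ[R] D) (hC : IsDualizing R C) :
    IsDualizing S D := by
  have hC' := sd_iff.2 hC.1
  have := hC'.fin
  have : Module.Finite R D := Module.Finite.equiv e
  have : Module.Finite S D := Module.Finite.of_restrictScalars_finite R S D
  obtain ⟨n, hn⟩ := injDim_lt_top_iff.1 hC.2
  refine ⟨sd_iff.1 ⟨this, ⟨fun s s' hs => ?_, fun ψ => ?_⟩, fun i hi =>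
      (ev_ring_iff h i).2 (((hC'.ext i hi).congr_left e).congr_right e)⟩,
    injDim_lt_top_of_residue ⟨n, fun i hi => (ev_ring_iff h i).2 ((hn _ i hi).congr_right e)⟩⟩
  · obtain ⟨r, rfl⟩ := h.2 s
    obtain ⟨r', rfl⟩ := h.2 s'
    refine congrArg _ (hC'.bij.1 (LinearMap.ext fun c => e.injective ?_))
    have := LinearMap.congr_fun hs (e c)
    simpa using this
  · obtain ⟨r, hr⟩ := hC'.bij.2 (e.symm.toLinearMap ∘ₗ ψ.restrictScalars R ∘ₗ e.toLinearMap)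
    refine ⟨algebraMap R S r, LinearMap.ext fun d => ?_⟩
    have := congrArg e (LinearMap.congr_fun hr (e.symm d))
    simpa using this

variable [IsLocalRing R] [IsNoetherianRing R]

lemma IsDualizing.bass (hC : IsDualizing R C) : ∃ d, Bass R C d 1 ∧ Module.supportDim R C = d := by
  have hC' := sd_iff.2 hC.1
  have := hC'.fin
  have := hC'.nontrivial
  obtain ⟨d, t, hB⟩ := exists_bass (R := R) (M := C)
  obtain ⟨n, hn⟩ := injDim_lt_top_iff.1 hC.2
  obtain ⟨rfl, hd⟩ := dualizing_bass d R C t hC' hB ⟨n, fun i => hn _ i⟩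
  exact ⟨d, hB, hd⟩

omit [IsNoetherianRing R] in
lemma Bass.isCohenMacaulay [Module.Finite R C] {d : ℕ} {t : ℕ∞} (h : Bass R C d t)
    (hd : Module.supportDim R C = d) : IsCohenMacaulayModule R C := by
  refine ⟨inferInstance, ?_⟩
  rw [Module.supportDim] at hd
  rw [hd, h.depth_eq]
  rfl

/-- If `C/aC` is dualizing for `R/a`, it is a Cohen-Macaulay `R`-module of type one. -/
lemma IsDualizing.quotient {a : Ideal R} [Nontrivial (R ⧸ a)]
    (h : IsDualizing (R ⧸ a) (C ⧸ (a • (⊤ : Submodule R C)))) :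
    Nontrivial (C ⧸ (a • (⊤ : Submodule R C))) ∧
      IsCohenMacaulayModule R (C ⧸ (a • (⊤ : Submodule R C))) ∧
      rtype R (C ⧸ (a • (⊤ : Submodule R C))) = 1 := by
  have hs : Function.Surjective (algebraMap R (R ⧸ a)) := Ideal.Quotient.mk_surjective
  have : IsLocalRing (R ⧸ a) := IsLocalRing.of_surjective' _ hs
  have : Module.Finite (R ⧸ a) (C ⧸ (a • (⊤ : Submodule R C))) := h.1.1
  have : Module.Finite R (C ⧸ (a • (⊤ : Submodule R C))) := Module.Finite.trans (R ⧸ a) _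
  obtain ⟨d, hB, hd⟩ := h.bass
  have hB' := (bass_ring_iff hs).1 hB
  rw [supportDim_ring_eq hs] at hd
  exact ⟨(sd_iff.2 h.1).nontrivial, hB'.isCohenMacaulay hd, hB'.rtype_eq⟩

end Final

/-- For a semidualizing module `C` over a Noetherian local ring, TFAE:
(i) `C` is dualizing; (ii) there is an ideal `a` with `G_C`-dim of `aC` finite and `C/aC`
dualizing for the local ring `R/a`; (iii) there is a nonzero Cohen-Macaulay module of type `1`
and finite `G_C`-dimension; (iv) `r_R(C) = 1` and there is a nonzero Cohen-Macaulay module of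
finite `G_C`-dimension. -/
theorem dualizing_tfae (R : Type u) [CommRing R] [IsNoetherianRing R] [IsLocalRing R]
    (C : Type u) [AddCommGroup C] [Module R C] (hC : IsSemidualizing R C) :
    (IsDualizing R C ↔ ∃ a : Ideal R, Nontrivial (R ⧸ a) ∧
        HasFiniteGCDim R C (↥(a • (⊤ : Submodule R C))) ∧
        IsDualizing (R ⧸ a) (C ⧸ (a • (⊤ : Submodule R C)))) ∧
    (IsDualizing R C ↔ ∃ (M : Type u) (_ : AddCommGroup M) (_ : Module R M),
        Nontrivial M ∧ IsCohenMacaulayModule R M ∧ rtype R M = 1 ∧ HasFiniteGCDim R C M) ∧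
    (IsDualizing R C ↔ rtype R C = 1 ∧
        ∃ (M : Type u) (_ : AddCommGroup M) (_ : Module R M),
          Nontrivial M ∧ IsCohenMacaulayModule R M ∧ HasFiniteGCDim R C M) := by
  have hC' := sd_iff.2 hC
  have hfin := hC'.fin
  have hnt := hC'.nontrivial
  have hG : IsTotallyCReflexive R C C := tr_iff.1 hC'.tr_self
  have hdual (h : IsDualizing R C) : IsCohenMacaulayModule R C ∧ rtype R C = 1 := by
    obtain ⟨d, hB, hd⟩ := h.bass
    exact ⟨hB.isCohenMacaulay hd, hB.rtype_eq⟩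
  refine ⟨⟨fun h => ?_, ?_⟩, ⟨fun h => ?_, ?_⟩, ⟨fun h => ?_, ?_⟩⟩
  · have hb : Function.Bijective (algebraMap R (R ⧸ (⊥ : Ideal R))) :=
      ⟨(injective_iff_map_eq_zero _).2 fun r hr =>
        (Submodule.mem_bot R).1 (Ideal.Quotient.eq_zero_iff_mem.1 hr), Ideal.Quotient.mk_surjective⟩
    have hnt' : Nontrivial (R ⧸ (⊥ : Ideal R)) := hb.1.nontrivial
    have hloc : IsLocalRing (R ⧸ (⊥ : Ideal R)) := IsLocalRing.of_surjective' _ hb.2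
    have h0 : (⊥ : Ideal R) • (⊤ : Submodule R C) = ⊥ := Submodule.bot_smul _
    have hsub : Subsingleton ↥((⊥ : Ideal R) • (⊤ : Submodule R C)) := by
      rw [h0]; infer_instance
    exact ⟨⊥, hnt', ⟨0, tr_iff.1 tr_of_subsingleton⟩,
      h.of_bijective hb (Submodule.quotEquivOfEqBot _ h0).symm⟩
  · rintro ⟨a, _, ⟨n, hn⟩, hd⟩
    obtain ⟨hM, hCM, ht⟩ := hd.quotient
    refine isDualizing_of_cohenMacaulay hC hCM ⟨n + 1, ?_⟩ (Or.inr ht)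
    exact ⟨C, _, _, _, _, _, Submodule.subtype _, Submodule.mkQ _, hG, Subtype.val_injective,
      Submodule.mkQ_surjective _, by rw [Submodule.range_subtype, Submodule.ker_mkQ], hn⟩
  · exact ⟨C, _, _, hnt, (hdual h).1, (hdual h).2, 0, hG⟩
  · rintro ⟨M, _, _, _, hM, ht, hF⟩
    exact isDualizing_of_cohenMacaulay hC hM hF (Or.inr ht)
  · exact ⟨(hdual h).2, C, _, _, hnt, (hdual h).1, 0, hG⟩
  · rintro ⟨ht, M, _, _, _, hM, hF⟩
    exact isDualizing_of_cohenMacaulay hC hM hF (Or.inl ht)
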